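/- arXiv:2205.09686 — 2 statements merged into one kernel-verified Lean document; each statement's English description precedes it below -/
import Mathlib

section
/- For all integers r ≥ 1 and s ≥ 1, the generating function Σ_{n≥0} |D_n^{r,s}| x^n equals x^{r+s}·(1 + x·m(x))^{r+s-2}·( 1 + x^2·(x·m(x))′ ), where m(x) = Σ_{n≥0} M_n x^n and ′ denotes the formal derivative of formal power series. -/
/-- A Dyck path of semilength `n`, encoded as a word on `Bool`
(`true` = up step `u`, `false` = down step `d`). -/
def IsDyckWord (n : ℕ) (w : List Bool) : Prop :=
  w.length = 2 * n ∧ w.count true = n ∧ w.count false = n ∧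
    ∀ p : List Bool, p <+: w → p.count false ≤ p.count true

/-- The (0-based) indices of the up steps of `w`. -/
def upIdxs (w : List Bool) : List ℕ := w.findIdxs (· == true)

/-- The (0-based) indices of the down steps of `w`. -/
def downIdxs (w : List Bool) : List ℕ := w.findIdxs (· == false)

/-- `rStat w i` is the number of `d`'s strictly between the `i`-th and the
`(i+1)`-st `u` of `w` (with `i` 1-indexed). -/
def rStat (w : List Bool) (i : ℕ) : ℕ :=
  ((w.take ((upIdxs w).getD i 0)).drop ((upIdxs w).getD (i - 1) 0 + 1)).count false

/-- `sStat w i` is the number of `u`'s strictly between the `i`-th and the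
`(i+1)`-st `d` of `w` (with `i` 1-indexed). -/
def sStat (w : List Bool) (i : ℕ) : ℕ :=
  ((w.take ((downIdxs w).getD i 0)).drop ((downIdxs w).getD (i - 1) 0 + 1)).count true

/-- The statistic `L(D) = ∏_{i=1}^{n-1} C(r_i + s_i, r_i)` of a Dyck path of semilength `n`. -/
def LStat (n : ℕ) (w : List Bool) : ℕ :=
  ∏ i ∈ Finset.Icc 1 (n - 1), Nat.choose (rStat w i + sStat w i) (rStat w i)

/-- `dyckL n k` = the set `𝒟ₙᵏ` of Dyck paths of semilength `n` with `L(D) = k`. -/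
def dyckL (n k : ℕ) : Set (List Bool) := {w | IsDyckWord n w ∧ LStat n w = k}

/-- A Motzkin path, encoded as a word on `Option Bool`
(`some true` = up, `some false` = down, `none` = horizontal). -/
def IsMotzkinWord (w : List (Option Bool)) : Prop :=
  w.count (some false) = w.count (some true) ∧
    ∀ p : List (Option Bool), p <+: w → p.count (some false) ≤ p.count (some true)

/-- `motzkin n` = the `n`-th Motzkin number `Mₙ`, the number of Motzkin paths of length `n`. -/
noncomputable def motzkin (n : ℕ) : ℕ :=
  {w : List (Option Bool) | w.length = n ∧ IsMotzkinWord w}.ncard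

/-- The Motzkin ballot number `T_{n,k}`: the number of Motzkin paths of length `n`
whose first down step is in position `k` (1-indexed); by convention `T_{k-1,k} = 1`,
counting the path of `k-1` horizontal steps. -/
noncomputable def motzkinBallot (n k : ℕ) : ℕ :=
  if n + 1 = k then 1
  else
    {w : List (Option Bool) | w.length = n ∧ IsMotzkinWord w ∧
      w.getD (k - 1) none = some false ∧ ∀ j < k - 1, w.getD j none ≠ some false}.ncard

/-- Motzkin numbers with integer index: `Mᵢ = 0` for `i < 0`. -/
noncomputable def motzkinZ (i : ℤ) : ℤ := if 0 ≤ i then (motzkin i.toNat : ℤ) else 0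

/-- Motzkin ballot numbers with integer first index: `T_{n,k} = 0` for `n < 0`. -/
noncomputable def motzkinBallotZ (n : ℤ) (k : ℕ) : ℤ :=
  if 0 ≤ n then (motzkinBallot n.toNat k : ℤ) else 0

/-- The set of returns of a Dyck path `w` of semilength `n`:
indices `1 ≤ k ≤ n` such that the path touches the `x`-axis after `2k` steps. -/
def returns (n : ℕ) (w : List Bool) : Finset ℕ :=
  (Finset.Icc 1 n).filter fun k => (w.take (2 * k)).count false = (w.take (2 * k)).count true

/-- `dyckRS n r s` = the set `𝒟ₙ^{r,s}` of Dyck paths of semilength `n` having exactly one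
index `i` with `rᵢ > 0` and `sᵢ > 0`, and such that at that index `rᵢ = r` and `sᵢ = s`. -/
def dyckRS (n r s : ℕ) : Set (List Bool) :=
  {w | IsDyckWord n w ∧ ∃ i ∈ Finset.Icc 1 (n - 1),
    (0 < rStat w i ∧ 0 < sStat w i) ∧ rStat w i = r ∧ sStat w i = s ∧
      ∀ j ∈ Finset.Icc 1 (n - 1), 0 < rStat w j ∧ 0 < sStat w j → j = i}

/-- `twoStars n w k₁ k₂` says that `k₁ < k₂` are exactly the two indices `i` of `w`
with `rᵢ > 0` and `sᵢ > 0`. -/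
def twoStars (n : ℕ) (w : List Bool) (k₁ k₂ : ℕ) : Prop :=
  k₁ ∈ Finset.Icc 1 (n - 1) ∧ k₂ ∈ Finset.Icc 1 (n - 1) ∧ k₁ < k₂ ∧
    (0 < rStat w k₁ ∧ 0 < sStat w k₁) ∧ (0 < rStat w k₂ ∧ 0 < sStat w k₂) ∧
    ∀ j ∈ Finset.Icc 1 (n - 1), 0 < rStat w j ∧ 0 < sStat w j → j = k₁ ∨ j = k₂

/-- `xStat w k` = the number of indices `i < k` with `rᵢ = 0` and `sᵢ > 0`. -/
def xStat (w : List Bool) (k : ℕ) : ℕ :=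
  ((Finset.Ico 1 k).filter fun i => rStat w i = 0 ∧ 0 < sStat w i).card

/-- `yStat w k` = the number of indices `i < k` with `rᵢ > 0` and `sᵢ = 0`. -/
def yStat (w : List Bool) (k : ℕ) : ℕ :=
  ((Finset.Ico 1 k).filter fun i => 0 < rStat w i ∧ sStat w i = 0).card

/-- The generating function `m(x) = Σ Mₙ xⁿ` of the Motzkin numbers, over `ℚ`. -/
noncomputable def motzkinGF : PowerSeries ℚ := PowerSeries.mk fun n => (motzkin n : ℚ)

/-- For each letter `x` of `w` that has a successor, record whether the successor differs
from `x`. -/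
def turns (x : Bool) : List Bool → List Bool
  | [] => []
  | [_] => []
  | a :: b :: w => if a = x then (b != x) :: turns x (b :: w) else turns x (b :: w)

@[simp] theorem turns_nil (x : Bool) : turns x [] = [] := rfl

@[simp] theorem turns_singleton (x a : Bool) : turns x [a] = [] := rfl

theorem turns_cons_cons (x a b : Bool) (w : List Bool) :
    turns x (a :: b :: w) = if a = x then (b != x) :: turns x (b :: w) else turns x (b :: w) :=
  rfl

theorem turns_append_cons (x y : Bool) (p q : List Bool) :
    turns x (p ++ y :: q) = turns x (p ++ [y]) ++ turns x (y :: q) := by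
  induction p with
  | nil => simp
  | cons a p ih =>
    cases p with
    | nil => by_cases h : a = x <;> simp [turns_cons_cons, h]
    | cons b p =>
      simp only [List.cons_append, turns_cons_cons] at ih ⊢
      split_ifs <;> simp [ih]

theorem length_turns_append_singleton (x y : Bool) (p : List Bool) :
    (turns x (p ++ [y])).length = p.count x := by
  induction p with
  | nil => simp
  | cons a p ih =>
    cases p with
    | nil => by_cases h : a = x <;> simp [turns_cons_cons, h]
    | cons b p =>
      simp only [List.cons_append, turns_cons_cons, List.count_cons] at ih ⊢
      split_ifs <;> simp_all

theorem take_turns_append (x y : Bool) (p q : List Bool) :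
    (turns x (p ++ y :: q)).take (p.count x) = turns x (p ++ [y]) := by
  rw [turns_append_cons, ← length_turns_append_singleton x y p, List.take_left']
  rfl

theorem count_turns_cons (x : Bool) (p : List Bool) :
    (turns x (x :: p)).count true =
      (turns (!x) (x :: p)).count true + if (x :: p).getLast? = some x then 0 else 1 := by
  induction p generalizing x with
  | nil => simp
  | cons y p ih =>
    by_cases h : y = x
    · subst h
      have := ih y
      simp_all [turns_cons_cons]
    · obtain rfl : y = !x := by cases x <;> cases y <;> simp_all
      have := ih (!x)
      simp only [Bool.not_not] at this
      simp only [turns_cons_cons, List.getLast?_cons_cons, if_true]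
      obtain ⟨z, hz⟩ : ∃ z, ((!x) :: p).getLast? = some z := ⟨_, List.getLast?_cons⟩
      rw [hz] at this ⊢
      cases z <;> cases x <;> simp_all

theorem count_turns_cons_append_singleton (x y : Bool) (p : List Bool) :
    (turns x (x :: (p ++ [y]))).count true =
      (turns (!x) (x :: (p ++ [y]))).count true + if y = x then 0 else 1 := by
  rw [count_turns_cons, ← List.cons_append, List.getLast?_append]
  simp

/-- A word is determined by its first letter and its two sequences of turns. -/
theorem turns_injective {x : Bool} {v w : List Bool}
    (h : ∀ y, turns y (x :: v) = turns y (x :: w)) : v = w := by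
  induction v generalizing x w with
  | nil =>
    cases w with
    | nil => rfl
    | cons b w => simpa [turns_cons_cons] using h x
  | cons a v ih =>
    cases w with
    | nil => simpa [turns_cons_cons] using h x
    | cons b w =>
      have hx := h x
      simp only [turns_cons_cons, if_true, List.cons.injEq] at hx
      obtain rfl : a = b := by cases a <;> cases b <;> cases x <;> simp_all
      congr 1
      refine ih (x := a) fun y => ?_
      by_cases hy : y = x
      · subst hy; exact hx.2
      · simpa [turns_cons_cons, Ne.symm hy] using h y

theorem turns_eq_append_true {x y : Bool} (hxy : y ≠ x) {w : List Bool} (hx : x ∈ w) :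
    ∃ l, turns x (w ++ [y]) = l ++ [true] := by
  induction w with
  | nil => simp at hx
  | cons a w ih =>
    by_cases hw : x ∈ w
    · obtain ⟨l, hl⟩ := ih hw
      cases w with
      | nil => simp at hw
      | cons b w =>
        simp only [List.cons_append, turns_cons_cons] at hl ⊢
        split_ifs
        · exact ⟨(b != x) :: l, by rw [hl]; rfl⟩
        · exact ⟨l, hl⟩
    · obtain rfl : x = a := by simpa [hw] using hx
      refine ⟨[], ?_⟩
      have hlen := length_turns_append_singleton x y (x :: w)
      rw [List.count_cons_self, List.count_eq_zero.2 hw] at hlen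
      cases w with
      | nil => simp [turns_cons_cons, hxy]
      | cons b w =>
        have hb : b ≠ x := fun h => hw (by simp [h])
        simp only [List.cons_append, turns_cons_cons, if_true, List.length_cons] at hlen ⊢
        have hnil : turns x (b :: (w ++ [y])) = [] :=
          List.eq_nil_of_length_eq_zero (by omega)
        simp [hb, hnil]

theorem exists_turns_eq (x : Bool) (a b : List Bool)
    (h : (x = true ∧ (∃ l, a = l ++ [true]) ∧ a.count true = b.count true + 1) ∨
      (x = false ∧ (b = [] ∨ ∃ l, b = l ++ [true]) ∧ a.count true = b.count true)) :
    ∃ v, (x :: v).getLast? = some false ∧ turns x (x :: v) = a ∧ turns (!x) (x :: v) = b := by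
  induction hn : a.length + b.length generalizing x a b with
  | zero =>
    obtain rfl : a = [] := List.eq_nil_of_length_eq_zero (by omega)
    obtain rfl : b = [] := List.eq_nil_of_length_eq_zero (by omega)
    rcases h with ⟨-, ⟨l, hl⟩, -⟩ | ⟨rfl, -⟩
    · simp at hl
    · exact ⟨[], by simp⟩
  | succ n ih =>
    rcases a with _ | ⟨_ | _, a⟩
    · rcases h with ⟨-, ⟨l, hl⟩, -⟩ | ⟨rfl, rfl | ⟨l, rfl⟩, h⟩
      · simp at hl
      · simp at hn
      · simp at h
    · obtain ⟨v, hv, h1, h2⟩ := ih x a b (by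
        rcases h with ⟨rfl, ⟨l, hl⟩, h⟩ | ⟨rfl, hb, h⟩
        · rcases l with _ | ⟨c, l⟩
          · simp at hl
          · exact Or.inl ⟨rfl, ⟨l, (List.cons.inj hl).2⟩, by simpa using h⟩
        · exact Or.inr ⟨rfl, hb, by simpa using h⟩) (by simp at hn; omega)
      exact ⟨x :: v, by simpa using hv, by simp [turns_cons_cons, h1],
        by simp [turns_cons_cons, h2]⟩
    · obtain ⟨v, hv, h1, h2⟩ := ih (!x) b a (by
        rcases h with ⟨rfl, ⟨l, hl⟩, h⟩ | ⟨rfl, hb, h⟩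
        · refine Or.inr ⟨rfl, ?_, by simpa using h.symm⟩
          rcases l with _ | ⟨c, l⟩
          · left; simpa using hl
          · exact Or.inr ⟨l, (List.cons.inj hl).2⟩
        · refine Or.inl ⟨rfl, hb.resolve_left ?_, by simpa using h.symm⟩
          rintro rfl
          simp at h) (by simp at hn; omega)
      refine ⟨(!x) :: v, by simpa using hv, ?_, ?_⟩
      · rw [Bool.not_not] at h2; simp [turns_cons_cons, h2]
      · simp [turns_cons_cons, h1]

theorem exists_eq_append_cons_of_lt_count {x : Bool} {w : List Bool} {i : ℕ}
    (h : i < w.count x) : ∃ p q, w = p ++ x :: q ∧ p.count x = i := by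
  induction w generalizing i with
  | nil => simp at h
  | cons a w ih =>
    by_cases ha : a = x
    · subst ha
      cases i with
      | zero => exact ⟨[], w, rfl, rfl⟩
      | succ i =>
        obtain ⟨p, q, rfl, hp⟩ := ih (i := i) (by simpa using h)
        exact ⟨a :: p, q, rfl, by simp [hp]⟩
    · obtain ⟨p, q, rfl, hp⟩ := ih (i := i) (by simpa [ha] using h)
      exact ⟨a :: p, q, rfl, by simp [ha, hp]⟩

theorem count_take_mono {α : Type*} [DecidableEq α] (x : α) (l : List α) {i j : ℕ} (h : i ≤ j) :
    (l.take i).count x ≤ (l.take j).count x :=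
  (List.take_sublist_take_left h).count_le x

/-- The sequence of turns at up steps of a Dyck word is dominated by the sequence of turns at
down steps. -/
theorem IsDyckWord.count_take_turns_le {n : ℕ} {v : List Bool} (h : IsDyckWord n (true :: v))
    {i : ℕ} (hi : i < n) :
    ((turns true (true :: v)).take i).count true ≤
      ((turns false (true :: v)).take i).count true := by
  obtain ⟨-, -, hf, hpre⟩ := h
  cases i with
  | zero => simp
  | succ i =>
    obtain ⟨p, q, hpq, hp⟩ := exists_eq_append_cons_of_lt_count (x := false) (w := true :: v)
      (i := i) (by omega)
    cases q with
    | nil => rw [hpq, List.count_append] at hf; simp at hf; omega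
    | cons y q =>
      rcases p with _ | ⟨c, p⟩
      · simp at hpq
      obtain rfl : c = true := by simpa using (List.cons.inj hpq).1.symm
      have hw : true :: v = (true :: p ++ [false]) ++ y :: q := by rw [hpq]; simp
      have hB := take_turns_append false y (true :: p ++ [false]) q
      have hA := take_turns_append true y (true :: p ++ [false]) q
      have hcount := count_turns_cons_append_singleton true y (p ++ [false])
      simp only [Bool.not_true] at hcount
      rw [← hw] at hA hB
      have hV : (true :: p ++ [false]).count false = i + 1 := by
        rw [List.count_append, hp]; rfl
      rw [hV] at hB
      rw [hB]
      cases y with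
      | true =>
        refine (count_take_mono true _ (j := (true :: p ++ [false]).count true) ?_).trans ?_
        · rw [← hV]; exact hpre _ ⟨true :: q, hw.symm⟩
        · rw [hA]; simpa using hcount.le
      | false =>
        obtain ⟨l, hl⟩ := turns_eq_append_true (x := true) (y := false) (by simp)
          (w := true :: p ++ [false]) (by simp)
        have hlen := length_turns_append_singleton true false (true :: p ++ [false])
        have hU : i + 2 ≤ (true :: p ++ [false]).count true := by
          have := hpre (true :: p ++ [false] ++ [false]) ⟨q, by rw [hw]; simp⟩
          rw [List.count_append, hV, List.count_append] at this
          simpa using this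
        have hlA : (turns true (true :: v)).take l.length = l := by
          have h1 : l.length ≤ (true :: p ++ [false]).count true := by
            rw [← hlen, hl]; simp
          rw [← min_eq_left h1, ← List.take_take, hA, hl]; simp
        refine (count_take_mono true _ (j := l.length) ?_).trans ?_
        · rw [hl] at hlen; simp at hlen hU ⊢; omega
        · rw [hlA]
          have : (turns true (true :: (p ++ [false] ++ [false]))).count true = l.count true + 1 := by
            rw [← List.cons_append, ← List.cons_append, hl]; simp
          rw [this] at hcount
          simpa using hcount.le

theorem isDyckWord_of_count_take_turns_le {n : ℕ} {v : List Bool}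
    (ht : (true :: v).count true = n) (hf : (true :: v).count false = n)
    (h : ∀ i < n, ((turns true (true :: v)).take i).count true ≤
      ((turns false (true :: v)).take i).count true) :
    IsDyckWord n (true :: v) := by
  refine ⟨?_, ht, hf, fun p hp => ?_⟩
  · rw [← List.count_true_add_count_false, ht, hf, two_mul]
  induction p using List.reverseRecOn with
  | nil => simp
  | append_singleton p y ih =>
    obtain ⟨q, hq⟩ := hp
    rw [List.append_assoc, List.singleton_append] at hq
    have ih := ih ⟨y :: q, hq⟩
    cases y with
    | true => simp only [List.count_append]; simp; omega
    | false =>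
      rcases p with _ | ⟨c, p⟩
      · simp at hq
      obtain rfl : c = true := by simpa using (List.cons.inj hq).1
      by_contra hlt
      have hUV : (true :: p).count false = (true :: p).count true := by
        simp only [List.count_append] at hlt; simp at hlt ih ⊢; omega
      have hn : (true :: p).count true < n := by
        rw [← hUV, ← hf, ← hq, List.count_append]; simp
      have hA := take_turns_append true false (true :: p) q
      have hB := take_turns_append false false (true :: p) q
      have hcount := count_turns_cons_append_singleton true false p
      have := h _ hn
      rw [hq] at hA hB
      rw [hA, ← hUV, hB] at this
      simp at this hcount
      omega

theorem IsDyckWord.exists_eq {N : ℕ} {w : List Bool} (h : IsDyckWord (N + 1) w) :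
    ∃ v, w = true :: (v ++ [false]) := by
  obtain ⟨hlen, ht, hf, hpre⟩ := h
  rcases w with _ | ⟨c, w⟩
  · simp at ht
  obtain rfl : c = true := by
    have := hpre [c] ⟨w, rfl⟩
    cases c <;> simp_all
  rcases List.eq_nil_or_concat w with rfl | ⟨v, y, rfl⟩
  · simp at hf
  have := hpre (true :: v) ⟨[y], by simp⟩
  cases y
  · exact ⟨v, by simp⟩
  · simp at ht hf this; omega

/-- `gapAt k l` is the distance from the `k`-th to the `(k+1)`-st occurrence of `true` in `l`,
where the zeroth occurrence is a virtual one just before the list. -/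
def gapAt : ℕ → List Bool → ℕ
  | _, [] => 0
  | 0, true :: _ => 1
  | 0, false :: l => gapAt 0 l + 1
  | k + 1, true :: l => gapAt k l
  | k + 1, false :: l => gapAt (k + 1) l

theorem gapAt_zero_replicate (g : ℕ) (l : List Bool) :
    gapAt 0 (List.replicate g false ++ true :: l) = g + 1 := by
  induction g with
  | zero => rfl
  | succ g ih => simp [List.replicate_succ, gapAt, ih]

theorem gapAt_add_count_append (d : ℕ) (l l' : List Bool) :
    gapAt (d + l.count true + 1) (l ++ true :: l') = gapAt d l' := by
  induction l with
  | nil => simp [gapAt]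
  | cons a l ih =>
    cases a
    · simpa [gapAt] using ih
    · simpa [gapAt, ← add_assoc] using ih

theorem gapAt_append_of_le {k : ℕ} {l : List Bool} (h : k ≤ l.count true) (l' : List Bool) :
    gapAt k (l ++ true :: l') = gapAt k (l ++ [true]) := by
  induction l generalizing k with
  | nil => obtain rfl : k = 0 := by simpa using h
           rfl
  | cons a l ih =>
    cases a <;> cases k
    · simpa [gapAt] using ih (k := 0) (by simp)
    · simpa [gapAt] using ih (by simpa using h)
    · simp [gapAt]
    · simpa [gapAt] using ih (by simpa using h)

theorem exists_eq_append_replicate {x : Bool} {w : List Bool} {i : ℕ} (h : i + 1 < w.count x) :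
    ∃ p r q, w = p ++ x :: (List.replicate r (!x) ++ x :: q) ∧ p.count x = i := by
  obtain ⟨p, q, rfl, hp⟩ := exists_eq_append_cons_of_lt_count (x := x) (w := w) (i := i) (by omega)
  obtain ⟨p', q, rfl, hp'⟩ := exists_eq_append_cons_of_lt_count (x := x) (w := q) (i := 0)
    (by simp at h; omega)
  refine ⟨p, p'.length, q, ?_, hp⟩
  rw [← List.eq_replicate_of_mem]
  intro b hb
  have : b ≠ x := fun hbx => List.count_eq_zero.1 hp' (hbx ▸ hb)
  cases b <;> cases x <;> simp_all

/-- Reversing a list reverses the order of its gaps. -/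
theorem gapAt_reverse {k h : ℕ} {l : List Bool} (hl : l.count true = k + h) :
    gapAt k (l.reverse ++ [true]) = gapAt h (l ++ [true]) := by
  obtain ⟨p, r, q, hpq, hp⟩ := exists_eq_append_replicate (x := true)
    (w := true :: (l ++ [true])) (i := h) (by simp; omega)
  have hq : q.count true = k := by
    have := congrArg (List.count true) hpq
    simp [List.count_append, List.count_replicate] at this
    omega
  have hrev : true :: (l.reverse ++ [true]) =
      q.reverse ++ true :: (List.replicate r false ++ true :: p.reverse) := by
    have := congrArg List.reverse hpq
    simpa using this
  have h1 : gapAt (h + 1) (true :: (l ++ [true])) = r + 1 := by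
    have := gapAt_add_count_append 0 p (List.replicate r false ++ true :: q)
    rw [hpq, Bool.not_true, ← gapAt_zero_replicate r q, ← this, hp, zero_add]
  have h2 : gapAt (k + 1) (true :: (l.reverse ++ [true])) = r + 1 := by
    have := gapAt_add_count_append 0 q.reverse (List.replicate r false ++ true :: p.reverse)
    rw [hrev, ← gapAt_zero_replicate r p.reverse, ← this, List.count_reverse, hq, zero_add]
  simpa [gapAt] using h2.trans h1.symm

theorem turns_replicate_append (y : Bool) (g : ℕ) (q : List Bool) :
    turns y ((!y) :: (List.replicate (g + 1) y ++ (!y) :: q)) =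
      List.replicate g false ++ true :: turns y ((!y) :: q) := by
  have key : ∀ g, turns y (List.replicate (g + 1) y ++ (!y) :: q) =
      List.replicate g false ++ true :: turns y ((!y) :: q) := by
    intro g
    induction g with
    | zero => simp [turns_cons_cons]
    | succ g ih =>
      rw [List.replicate_succ, List.replicate_succ]
      rw [List.replicate_succ] at ih
      simp only [List.cons_append, turns_cons_cons, if_true] at ih ⊢
      rw [ih]
      simp [List.replicate_succ]
  rw [← key, List.replicate_succ, List.cons_append, turns_cons_cons]
  simp

theorem gapAt_turns {y : Bool} {p : List Bool} (hy : y ∈ p) (g : ℕ) (q : List Bool) :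
    gapAt ((turns y (p ++ [!y])).count true)
      (turns y (p ++ (!y) :: (List.replicate (g + 1) y ++ (!y) :: q))) = g + 1 := by
  obtain ⟨l, hl⟩ := turns_eq_append_true (y := !y) (by simp) hy
  rw [turns_append_cons y (!y) p (List.replicate (g + 1) y ++ _), turns_replicate_append, hl,
    ← gapAt_zero_replicate g (turns y ((!y) :: q)),
    ← gapAt_add_count_append 0 l]
  simp

theorem count_between_findIdxs (x : Bool) (p q : List Bool) (r : ℕ) (w : List Bool)
    (hw : w = p ++ x :: (List.replicate r (!x) ++ x :: q)) :
    ((w.take ((w.findIdxs (· == x)).getD (p.count x + 1) 0)).drop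
      ((w.findIdxs (· == x)).getD (p.count x) 0 + 1)).count (!x) = r := by
  have hidx : w.findIdxs (· == x) = p.findIdxs (· == x) ++ p.length :: (p.length + 1 + r) ::
      q.findIdxs (· == x) (p.length + 1 + r + 1) := by
    have : ∀ s, (List.replicate r (!x)).findIdxs (· == x) s = [] := by
      intro s
      rw [List.findIdxs_eq_nil_iff]
      simp
    simp [hw, List.findIdxs_append, List.findIdxs_cons, this]
  have hlen : (p.findIdxs (· == x)).length = p.count x := by
    rw [List.length_findIdxs]; rfl
  have h1 : (w.findIdxs (· == x)).getD (p.count x) 0 = p.length := by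
    rw [hidx, ← hlen]; simp
  have h2 : (w.findIdxs (· == x)).getD (p.count x + 1) 0 = p.length + 1 + r := by
    rw [hidx, ← hlen]; simp
  have hw' : w = (p ++ [x]) ++ List.replicate r (!x) ++ x :: q := by simp [hw]
  have h3 : p.length + 1 + r = ((p ++ [x]) ++ List.replicate r (!x)).length := by
    simp; omega
  rw [h1, h2, h3, hw', List.take_left', List.drop_left']
  · simp
  · simp
  · rfl

theorem getElem?_turns (x : Bool) (p q : List Bool) (r : ℕ) :
    (turns x (p ++ x :: (List.replicate r (!x) ++ x :: q)))[p.count x]? =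
      some (decide (0 < r)) := by
  rw [turns_append_cons, ← length_turns_append_singleton x x p, List.getElem?_append_right le_rfl]
  cases r <;> simp [List.replicate_succ, turns_cons_cons]

theorem rStat_pos_iff {w : List Bool} {i : ℕ} (h : i + 1 < w.count true) :
    0 < rStat w (i + 1) ↔ (turns true w)[i]? = some true := by
  obtain ⟨p, r, q, hw, hp⟩ := exists_eq_append_replicate h
  have hr := count_between_findIdxs true p q r w hw
  have ht := getElem?_turns true p q r
  rw [← hw, hp] at ht
  rw [hp] at hr
  rw [ht, rStat, upIdxs, Nat.add_sub_cancel]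
  simp only [Bool.not_true] at hr
  rw [hr]
  simp

theorem sStat_pos_iff {w : List Bool} {i : ℕ} (h : i + 1 < w.count false) :
    0 < sStat w (i + 1) ↔ (turns false w)[i]? = some true := by
  obtain ⟨p, r, q, hw, hp⟩ := exists_eq_append_replicate h
  have hr := count_between_findIdxs false p q r w hw
  have ht := getElem?_turns false p q r
  rw [← hw, hp] at ht
  rw [hp] at hr
  rw [ht, sStat, downIdxs, Nat.add_sub_cancel]
  simp only [Bool.not_false] at hr
  rw [hr]
  simp

theorem rStat_eq_gapAt {v : List Bool} {i : ℕ} (h : i + 1 < (true :: (v ++ [false])).count true)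
    (hi : (turns true (true :: (v ++ [false])))[i]? = some true) :
    rStat (true :: (v ++ [false])) (i + 1) =
      gapAt (((turns true (true :: (v ++ [false]))).take i).count true)
        (turns false (true :: (v ++ [false])) ++ [true]) := by
  have hB : turns false (false :: (true :: (v ++ [false])) ++ [true]) =
      true :: (turns false (true :: (v ++ [false])) ++ [true]) := by
    have := turns_append_cons false false (true :: v) [true]
    simp only [List.cons_append, List.append_assoc, List.nil_append] at this ⊢
    rw [turns_cons_cons, this]
    simp [turns_cons_cons]
  generalize true :: (v ++ [false]) = w at *
  obtain ⟨p, r, q, hw, hp⟩ := exists_eq_append_replicate h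
  have hr := count_between_findIdxs true p q r w hw
  have ht := getElem?_turns true p q r
  rw [← hw, hp, hi] at ht
  obtain ⟨g, rfl⟩ : ∃ g, r = g + 1 := Nat.exists_eq_add_of_lt (by simpa using ht) |>.imp (by simp)
  have hgap := gapAt_turns (y := false) (p := false :: p) (by simp) g (q ++ [true])
  have hcount := count_turns_cons_append_singleton false true p
  have htake := take_turns_append true true p (List.replicate (g + 1) false ++ true :: q)
  have hfalse : turns true (false :: (p ++ [true])) = turns true (p ++ [true]) := by
    cases p <;> simp [turns_cons_cons]
  have hW : false :: p ++ true :: (List.replicate (g + 1) false ++ true :: (q ++ [true])) =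
      false :: w ++ [true] := by
    simp [hw]
  simp only [Bool.not_true, Bool.not_false] at *
  rw [← hw, hp] at htake
  rw [List.cons_append, hcount, hfalse, ← htake, hW, hB] at hgap
  rw [rStat, upIdxs, Nat.add_sub_cancel, ← hp, hr, hp, ← hgap]
  simp [gapAt]

theorem sStat_eq_gapAt {v : List Bool} {i : ℕ} (h : i + 1 < (true :: v).count false)
    (hi : (turns false (true :: v))[i]? = some true) :
    sStat (true :: v) (i + 1) =
      gapAt (((turns false (true :: v)).take i).count true + 1) (turns true (true :: v)) := by
  obtain ⟨p, r, q, hw, hp⟩ := exists_eq_append_replicate h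
  have hr := count_between_findIdxs false p q r _ hw
  have ht := getElem?_turns false p q r
  rw [← hw, hp, hi] at ht
  obtain ⟨g, rfl⟩ : ∃ g, r = g + 1 := Nat.exists_eq_add_of_lt (by simpa using ht) |>.imp (by simp)
  rcases p with _ | ⟨c, p⟩
  · simp at hw
  obtain rfl : c = true := by simpa using (List.cons.inj hw).1.symm
  have hgap := gapAt_turns (y := true) (p := true :: p) (by simp) g q
  have hcount := count_turns_cons_append_singleton true false p
  have htake := take_turns_append false false (true :: p)
    (List.replicate (g + 1) true ++ false :: q)
  simp only [Bool.not_true, Bool.not_false] at *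
  rw [← hw, hp] at htake
  rw [← hw, List.cons_append, hcount, ← List.cons_append, ← htake] at hgap
  rw [sStat, downIdxs, Nat.add_sub_cancel, ← hp, hr, hp, ← hgap]
  simp

/-- Words tracing a nonnegative lattice path from height `t` to height `0` with steps
`some true` (up), `some false` (down) and `none` (horizontal). -/
def IsMotzkinFrom : ℕ → List (Option Bool) → Prop
  | t, [] => t = 0
  | t, none :: w => IsMotzkinFrom t w
  | t, some true :: w => IsMotzkinFrom (t + 1) w
  | 0, some false :: _ => False
  | t + 1, some false :: w => IsMotzkinFrom t w

theorem isMotzkinFrom_iff_prefix {t : ℕ} {w : List (Option Bool)} :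
    IsMotzkinFrom t w ↔ w.count (some false) = w.count (some true) + t ∧
      ∀ p, p <+: w → p.count (some false) ≤ p.count (some true) + t := by
  induction w generalizing t with
  | nil => simp [IsMotzkinFrom, eq_comm]
  | cons a w ih =>
    have hpre : ∀ (C : List (Option Bool) → Prop), (∀ p, p <+: a :: w → C p) ↔
        C [] ∧ ∀ p, p <+: w → C (a :: p) := by
      intro C
      refine ⟨fun h => ⟨h _ List.nil_prefix, fun p hp => h _ (by simpa using hp)⟩, ?_⟩
      rintro ⟨h1, h2⟩ p hp
      rcases List.prefix_cons_iff.1 hp with rfl | ⟨p', rfl, hp'⟩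
      · exact h1
      · exact h2 _ hp'
    rw [hpre]
    rcases a with _ | (_ | _)
    · simp [IsMotzkinFrom, ih]
    · cases t with
      | zero =>
        simp only [IsMotzkinFrom, false_iff, not_and, not_forall]
        rintro - -
        exact ⟨[], by simp⟩
      | succ t =>
        simp only [IsMotzkinFrom, ih]
        simp [← add_assoc]
    · simp only [IsMotzkinFrom, ih]
      simp [add_assoc, add_comm 1]

theorem isMotzkinWord_iff {w : List (Option Bool)} : IsMotzkinWord w ↔ IsMotzkinFrom 0 w := by
  rw [isMotzkinFrom_iff_prefix]; rfl

theorem isMotzkinFrom_iff_drop {t : ℕ} {w : List (Option Bool)} :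
    IsMotzkinFrom t w ↔ w.count (some false) = w.count (some true) + t ∧
      ∀ j, (w.drop j).count (some true) ≤ (w.drop j).count (some false) := by
  rw [isMotzkinFrom_iff_prefix]
  refine and_congr_right fun h => ?_
  have key : ∀ j x, (w.take j).count x + (w.drop j).count x = w.count x := fun j x => by
    rw [← List.count_append, List.take_append_drop]
  constructor
  · intro hp j
    have := hp (w.take j) (List.take_prefix _ _)
    have := key j (some true)
    have := key j (some false)
    omega
  · intro hj p hp
    rw [List.prefix_iff_eq_take.1 hp]
    have := hj p.length
    have := key p.length (some true)
    have := key p.length (some false)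
    omega

theorem IsMotzkinFrom.eq {t t' : ℕ} {w : List (Option Bool)} (h : IsMotzkinFrom t w)
    (h' : IsMotzkinFrom t' w) : t = t' := by
  have := (isMotzkinFrom_iff_prefix.1 h).1
  have := (isMotzkinFrom_iff_prefix.1 h').1
  omega

theorem IsMotzkinFrom.le_length {t : ℕ} {w : List (Option Bool)} (h : IsMotzkinFrom t w) :
    t ≤ w.length := by
  have := (isMotzkinFrom_iff_prefix.1 h).1
  have := List.count_le_length (a := some false) (l := w)
  omega

/-- The indicator list of the steps of `w` equal to `some x`. -/
def stepsEq (x : Bool) (w : List (Option Bool)) : List Bool := w.map (· == some x)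

@[simp] theorem length_stepsEq (x : Bool) (w : List (Option Bool)) :
    (stepsEq x w).length = w.length := by simp [stepsEq]

@[simp] theorem count_stepsEq (x : Bool) (w : List (Option Bool)) :
    (stepsEq x w).count true = w.count (some x) := by
  induction w with
  | nil => rfl
  | cons a w ih =>
    rw [stepsEq, List.map_cons, List.count_cons, List.count_cons, ← stepsEq, ih]
    simp

theorem drop_stepsEq (x : Bool) (w : List (Option Bool)) (j : ℕ) :
    (stepsEq x w).drop j = stepsEq x (w.drop j) := by simp [stepsEq]

theorem exists_stepsEq_eq {a b : List Bool} (hlen : a.length = b.length)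
    (h : ∀ j : ℕ, a[j]? = some true → b[j]? = some true → False) :
    ∃ w, stepsEq false w = a ∧ stepsEq true w = b := by
  induction a generalizing b with
  | nil =>
    obtain rfl : b = [] := List.eq_nil_of_length_eq_zero hlen.symm
    exact ⟨[], rfl, rfl⟩
  | cons c a ih =>
    rcases b with _ | ⟨d, b⟩
    · simp at hlen
    obtain ⟨w, rfl, rfl⟩ := ih (b := b) (by simpa using hlen)
      (fun j h1 h2 => h (j + 1) (by simpa using h1) (by simpa using h2))
    have h0 := h 0
    cases c <;> cases d
    · exact ⟨none :: w, by simp [stepsEq]⟩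
    · exact ⟨some true :: w, by simp [stepsEq]⟩
    · exact ⟨some false :: w, by simp [stepsEq]⟩
    · simp at h0

theorem stepsEq_injective {w w' : List (Option Bool)} (h : ∀ x, stepsEq x w = stepsEq x w') :
    w = w' := by
  induction w generalizing w' with
  | nil =>
    have := congrArg List.length (h true)
    exact (List.eq_nil_of_length_eq_zero (by simpa using this.symm)).symm
  | cons a w ih =>
    rcases w' with _ | ⟨b, w'⟩
    · simpa [stepsEq] using h true
    simp only [stepsEq, List.map_cons, List.cons.injEq] at h
    rw [ih fun x => (h x).2]
    congr 1
    have h1 := (h true).1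
    have h2 := (h false).1
    rcases a with _ | (_ | _) <;> rcases b with _ | (_ | _) <;> simp_all

/-- The list describing, for `x = true`, the turns at up steps (except the last one), and, for
`x = false`, the turns at down steps, of the Dyck word with a single common turn that is encoded
by the pair `(P, Q)`; here `P` is read backwards from the common turn and `Q` forwards. -/
def pairTurns (x : Bool) (P Q : List (Option Bool)) : List Bool :=
  (stepsEq x P).reverse ++ true :: stepsEq (!x) Q

theorem length_pairTurns (x : Bool) (P Q : List (Option Bool)) :
    (pairTurns x P Q).length = P.length + Q.length + 1 := by
  simp [pairTurns, add_assoc]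

theorem count_pairTurns (x : Bool) (P Q : List (Option Bool)) :
    (pairTurns x P Q).count true = P.count (some x) + Q.count (some (!x)) + 1 := by
  simp [pairTurns, add_assoc]

theorem count_take_pairTurns (x : Bool) (P Q : List (Option Bool)) {i : ℕ} (hi : i ≤ P.length) :
    ((pairTurns x P Q).take i).count true = (P.drop (P.length - i)).count (some x) := by
  rw [pairTurns, List.take_append_of_le_length (by simpa using hi), List.take_reverse,
    drop_stepsEq, List.count_reverse, count_stepsEq, length_stepsEq]

theorem count_take_add_pairTurns (x : Bool) (P Q : List (Option Bool)) (j : ℕ) :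
    ((pairTurns x P Q).take (P.length + 1 + j)).count true + (Q.drop j).count (some (!x)) =
      (pairTurns x P Q).count true := by
  have hd : (pairTurns x P Q).drop (P.length + 1 + j) = stepsEq (!x) (Q.drop j) := by
    rw [← drop_stepsEq, pairTurns, ← List.singleton_append, ← List.append_assoc, ← List.drop_drop,
      List.drop_left']
    simp
  rw [← count_stepsEq, ← hd, ← List.count_append, List.take_append_drop]

theorem exists_isMotzkinFrom_iff {P Q : List (Option Bool)} :
    (∃ h, IsMotzkinFrom h P ∧ IsMotzkinFrom h Q) ↔
      (pairTurns true P Q).count true = (pairTurns false P Q).count true ∧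
      ∀ i, ((pairTurns true P Q).take i).count true ≤ ((pairTurns false P Q).take i).count true := by
  constructor
  · rintro ⟨h, hP, hQ⟩
    rw [isMotzkinFrom_iff_drop] at hP hQ
    have htot : (pairTurns true P Q).count true = (pairTurns false P Q).count true := by
      simp [count_pairTurns, hP.1, hQ.1]; omega
    refine ⟨htot, fun i => ?_⟩
    rcases le_or_gt i P.length with hi | hi
    · rw [count_take_pairTurns _ _ _ hi, count_take_pairTurns _ _ _ hi]
      exact hP.2 _
    · obtain ⟨j, rfl⟩ := Nat.exists_eq_add_of_le (Nat.succ_le_of_lt hi)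
      have h1 := count_take_add_pairTurns true P Q j
      have h2 := count_take_add_pairTurns false P Q j
      have := hQ.2 j
      simp only [Bool.not_true, Bool.not_false, Nat.succ_eq_add_one] at *
      omega
  · rintro ⟨htot, hdom⟩
    have hP : ∀ j, (P.drop j).count (some true) ≤ (P.drop j).count (some false) := by
      intro j
      rcases le_or_gt j P.length with hj | hj
      · have := hdom (P.length - j)
        rwa [count_take_pairTurns _ _ _ (by omega), count_take_pairTurns _ _ _ (by omega),
          Nat.sub_sub_self hj] at this
      · simp [List.drop_eq_nil_of_le hj.le]
    have h0 := hP 0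
    obtain ⟨h, hh⟩ := Nat.exists_eq_add_of_le h0
    rw [List.drop_zero] at hh
    refine ⟨h, isMotzkinFrom_iff_drop.2 ⟨hh, hP⟩, isMotzkinFrom_iff_drop.2 ⟨?_, fun j => ?_⟩⟩
    · simp [count_pairTurns] at htot; omega
    · have h1 := count_take_add_pairTurns true P Q j
      have h2 := count_take_add_pairTurns false P Q j
      have := hdom (P.length + 1 + j)
      simp only [Bool.not_true, Bool.not_false] at *
      omega

theorem getElem?_pairTurns_eq_true_iff {P Q : List (Option Bool)} {j : ℕ} :
    ((pairTurns true P Q)[j]? = some true ∧ (pairTurns false P Q)[j]? = some true) ↔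
      j = P.length := by
  constructor
  · rintro ⟨h1, h2⟩
    rcases lt_trichotomy j P.length with hj | hj | hj
    · rw [pairTurns, List.getElem?_append_left (by simpa using hj)] at h1 h2
      simp [stepsEq, ← List.map_reverse] at h1 h2
      grind
    · exact hj
    · obtain ⟨k, rfl⟩ := Nat.exists_eq_add_of_lt hj
      rw [pairTurns, List.getElem?_append_right (by simp; omega)] at h1 h2
      simp [stepsEq, add_assoc] at h1 h2
      grind
  · rintro rfl
    simp [pairTurns]

theorem pairTurns_injective {P Q P' Q' : List (Option Bool)}
    (h : ∀ x, pairTurns x P Q = pairTurns x P' Q') : P = P' ∧ Q = Q' := by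
  have hlen : P.length = P'.length := by
    have := getElem?_pairTurns_eq_true_iff (P := P) (Q := Q) (j := P.length)
    rw [h true, h false, getElem?_pairTurns_eq_true_iff] at this
    simpa using this
  have hx := fun x => List.append_inj (h x) (by simpa using hlen)
  refine ⟨stepsEq_injective fun x => List.reverse_injective (hx x).1,
    stepsEq_injective fun x => ?_⟩
  simpa using (List.cons.inj (hx (!x)).2).2

/-- The Dyck word `w` is encoded by the pair `x` of lattice words. -/
def IsEncodedBy (w : List Bool) (x : List (Option Bool) × List (Option Bool)) : Prop :=
  ∃ v, w = true :: (v ++ [false]) ∧ turns true w = pairTurns true x.1 x.2 ++ [true] ∧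
    turns false w = pairTurns false x.1 x.2

/-- Pairs of lattice words of total length `N` whose common height is `h` and whose gaps after
the first `h` down steps are `r` and `s`. -/
def gapPairs (N r s : ℕ) : Set (List (Option Bool) × List (Option Bool)) :=
  {x | x.1.length + x.2.length = N ∧ ∃ h,
    (IsMotzkinFrom h x.1 ∧ gapAt h (stepsEq false x.1 ++ [true]) = r) ∧
    (IsMotzkinFrom h x.2 ∧ gapAt h (stepsEq false x.2 ++ [true]) = s)}

namespace IsEncodedBy

variable {w : List Bool} {P Q : List (Option Bool)}

theorem count_eq (h : IsEncodedBy w (P, Q)) (x : Bool) :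
    w.count x = P.length + Q.length + 2 := by
  obtain ⟨v, rfl, ht, hf⟩ := h
  have h1 := length_turns_append_singleton true false (true :: v)
  have h2 := length_turns_append_singleton false false (true :: v)
  rw [List.cons_append] at h1 h2
  rw [ht, List.length_append, length_pairTurns] at h1
  rw [hf, length_pairTurns] at h2
  rw [← List.cons_append, List.count_append]
  cases x <;> simp at h1 h2 ⊢ <;> omega

theorem isDyckWord_iff (h : IsEncodedBy w (P, Q)) :
    IsDyckWord (P.length + Q.length + 2) w ↔ ∃ t, IsMotzkinFrom t P ∧ IsMotzkinFrom t Q := by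
  have hct := h.count_eq true
  have hcf := h.count_eq false
  obtain ⟨v, rfl, ht, hf⟩ := h
  have htot := count_turns_cons_append_singleton true false v
  simp only [Bool.not_true] at htot
  rw [ht, hf, List.count_append] at htot
  have htake : ∀ i < P.length + Q.length + 2,
      (pairTurns true P Q ++ [true]).take i = (pairTurns true P Q).take i := fun i hi =>
    List.take_append_of_le_length (by rw [length_pairTurns]; omega)
  rw [exists_isMotzkinFrom_iff]
  constructor
  · intro hD
    refine ⟨by simpa using htot, fun i => ?_⟩
    have key : ∀ i < P.length + Q.length + 2, ((pairTurns true P Q).take i).count true ≤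
        ((pairTurns false P Q).take i).count true := by
      intro i hi
      have := hD.count_take_turns_le hi
      rwa [ht, hf, htake i hi] at this
    rcases lt_or_ge i (P.length + Q.length + 2) with hi | hi
    · exact key i hi
    · rw [List.take_of_length_le (by rw [length_pairTurns]; omega),
        List.take_of_length_le (by rw [length_pairTurns]; omega)]
      simpa using htot.le
  · rintro ⟨-, hdom⟩
    refine isDyckWord_of_count_take_turns_le hct hcf fun i hi => ?_
    rw [ht, hf, htake i hi]
    exact hdom i

theorem stat_pos_iff (h : IsEncodedBy w (P, Q)) {j : ℕ}
    (hj : j ∈ Finset.Icc 1 (P.length + Q.length + 2 - 1)) :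
    (0 < rStat w j ∧ 0 < sStat w j) ↔ j = P.length + 1 := by
  have hct := h.count_eq true
  have hcf := h.count_eq false
  obtain ⟨v, rfl, ht, hf⟩ := h
  dsimp only at ht hf
  rw [Finset.mem_Icc] at hj
  obtain ⟨i, rfl⟩ : ∃ i, j = i + 1 := ⟨j - 1, by omega⟩
  rw [rStat_pos_iff (by omega), sStat_pos_iff (by omega), ht, hf,
    List.getElem?_append_left (by rw [length_pairTurns]; omega), getElem?_pairTurns_eq_true_iff]
  simp

theorem stat_eq (h : IsEncodedBy w (P, Q)) {t : ℕ} (hP : IsMotzkinFrom t P) :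
    rStat w (P.length + 1) = gapAt t (stepsEq false P ++ [true]) ∧
      sStat w (P.length + 1) = gapAt t (stepsEq false Q ++ [true]) := by
  have hct := h.count_eq true
  have hcf := h.count_eq false
  obtain ⟨v, rfl, ht, hf⟩ := h
  have hturn := getElem?_pairTurns_eq_true_iff (P := P) (Q := Q) (j := P.length)
  simp only [iff_true] at hturn
  have hlen : ∀ x, P.length < (pairTurns x P Q).length := fun x => by
    rw [length_pairTurns]; omega
  have hcP := (isMotzkinFrom_iff_prefix.1 hP).1
  constructor
  · rw [rStat_eq_gapAt (by omega) (by rw [ht, List.getElem?_append_left (hlen _)]; exact hturn.1),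
      ht, hf, List.take_append_of_le_length (hlen _).le, count_take_pairTurns _ _ _ le_rfl,
      Nat.sub_self, List.drop_zero, pairTurns, List.append_assoc, List.cons_append,
      gapAt_append_of_le (by simp; omega)]
    exact gapAt_reverse (by simpa using hcP)
  · rw [sStat_eq_gapAt (by omega) (by rw [hf]; exact hturn.2), ht, hf,
      count_take_pairTurns _ _ _ le_rfl, Nat.sub_self, List.drop_zero, pairTurns,
      List.append_assoc, List.cons_append, hcP, add_comm _ t]
    have := gapAt_add_count_append t (stepsEq true P).reverse (stepsEq false Q ++ [true])
    simpa using this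

theorem mem_dyckRS_iff (h : IsEncodedBy w (P, Q)) (r s : ℕ) :
    w ∈ dyckRS (P.length + Q.length + 2) r s ↔ (P, Q) ∈ gapPairs (P.length + Q.length) r s := by
  constructor
  · rintro ⟨hD, i, hi, hpos, hr, hs, -⟩
    obtain ⟨t, hP, hQ⟩ := h.isDyckWord_iff.1 hD
    obtain rfl := (h.stat_pos_iff hi).1 hpos
    obtain ⟨hr', hs'⟩ := h.stat_eq hP
    exact ⟨rfl, t, ⟨hP, hr' ▸ hr⟩, hQ, hs' ▸ hs⟩
  · rintro ⟨-, t, ⟨hP, hr⟩, hQ, hs⟩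
    obtain ⟨hr', hs'⟩ := h.stat_eq hP
    have hmem : P.length + 1 ∈ Finset.Icc 1 (P.length + Q.length + 2 - 1) := by
      rw [Finset.mem_Icc]; omega
    exact ⟨h.isDyckWord_iff.2 ⟨t, hP, hQ⟩, _, hmem, (h.stat_pos_iff hmem).2 rfl, hr'.trans hr,
      hs'.trans hs, fun j hj hpos => (h.stat_pos_iff hj).1 hpos⟩

theorem eq_of_eq {w' : List Bool} {x : List (Option Bool) × List (Option Bool)}
    (h : IsEncodedBy w x) (h' : IsEncodedBy w' x) : w = w' := by
  obtain ⟨v, rfl, ht, hf⟩ := h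
  obtain ⟨v', rfl, ht', hf'⟩ := h'
  congr 1
  refine turns_injective (x := true) fun y => ?_
  cases y
  · exact hf.trans hf'.symm
  · exact ht.trans ht'.symm

theorem pair_eq_of_eq {x x' : List (Option Bool) × List (Option Bool)}
    (h : IsEncodedBy w x) (h' : IsEncodedBy w x') : x = x' := by
  obtain ⟨v, -, ht, hf⟩ := h
  obtain ⟨v', -, ht', hf'⟩ := h'
  rw [Prod.ext_iff]
  refine pairTurns_injective fun y => ?_
  cases y
  · exact hf.symm.trans hf'
  · exact List.append_cancel_right (ht.symm.trans ht')

end IsEncodedBy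

theorem exists_isEncodedBy_of_mem_gapPairs {N r s : ℕ}
    {x : List (Option Bool) × List (Option Bool)} (hx : x ∈ gapPairs N r s) :
    ∃ w, IsEncodedBy w x := by
  obtain ⟨-, h, ⟨hP, -⟩, hQ, -⟩ := hx
  have hcount := (exists_isMotzkinFrom_iff.1 ⟨h, hP, hQ⟩).1
  obtain ⟨v, hv, ht, hf⟩ := exists_turns_eq true (pairTurns true x.1 x.2 ++ [true])
    (pairTurns false x.1 x.2) (Or.inl ⟨rfl, ⟨_, rfl⟩, by simp [hcount]⟩)
  rcases List.eq_nil_or_concat v with rfl | ⟨v, y, rfl⟩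
  · simp at hv
  · obtain rfl : y = false := by
      rw [List.concat_eq_append, ← List.cons_append, List.getLast?_append] at hv
      simpa using hv
    rw [List.concat_eq_append] at ht hf
    exact ⟨_, v, rfl, ht, hf⟩

theorem exists_isEncodedBy_of_mem_dyckRS {n r s : ℕ} {w : List Bool} (hw : w ∈ dyckRS n r s) :
    ∃ x, IsEncodedBy w x := by
  obtain ⟨hD, i, hi, ⟨hri, hsi⟩, -, -, huniq⟩ := hw
  have hi' := Finset.mem_Icc.1 hi
  obtain ⟨N, rfl⟩ : ∃ N, n = N + 1 := ⟨n - 1, by omega⟩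
  obtain ⟨i, rfl⟩ : ∃ k, i = k + 1 := ⟨i - 1, by omega⟩
  obtain ⟨v, rfl⟩ := hD.exists_eq
  obtain ⟨-, hct, hcf, -⟩ := hD
  obtain ⟨a, ha⟩ := turns_eq_append_true (x := true) (y := false) (by simp) (w := true :: v)
    (by simp)
  obtain ⟨b, hb⟩ : ∃ b, turns false (true :: v ++ [false]) = b := ⟨_, rfl⟩
  have hla : a.length = N := by
    have := length_turns_append_singleton true false (true :: v)
    rw [ha] at this
    rw [← List.cons_append, List.count_append] at hct
    simp at this hct
    omega
  have hlb : b.length = N := by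
    have := length_turns_append_singleton false false (true :: v)
    rw [hb] at this
    rw [← List.cons_append, List.count_append] at hcf
    simp at this hcf
    omega
  rw [List.cons_append] at ha hb
  have hr : ∀ j < N, (0 < rStat (true :: (v ++ [false])) (j + 1) ↔ a[j]? = some true) := by
    intro j hj
    rw [rStat_pos_iff (by omega), ha, List.getElem?_append_left (by omega)]
  have hs : ∀ j < N, (0 < sStat (true :: (v ++ [false])) (j + 1) ↔ b[j]? = some true) := by
    intro j hj
    rw [sStat_pos_iff (by omega), hb]
  have hiN : i < N := by omega
  have hai := (hr i hiN).1 hri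
  have hbi := (hs i hiN).1 hsi
  have hne : ∀ j, a[j]? = some true → b[j]? = some true → j = i := by
    intro j h1 h2
    have hj : j < N := by
      rw [← hla]; exact (List.getElem?_eq_some_iff.1 h1).1
    have := huniq (j + 1) (Finset.mem_Icc.2 (by omega)) ⟨(hr j hj).2 h1, (hs j hj).2 h2⟩
    omega
  have hsplit : ∀ l : List Bool, l[i]? = some true → l = l.take i ++ true :: l.drop (i + 1) := by
    intro l hl
    obtain ⟨h1, h2⟩ := List.getElem?_eq_some_iff.1 hl
    rw [← h2, List.cons_getElem_drop_succ, List.take_append_drop]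
  obtain ⟨Q, hQa, hQb⟩ := exists_stepsEq_eq (a := a.drop (i + 1)) (b := b.drop (i + 1))
    (by simp [hla, hlb]) (fun j h1 h2 => by
      rw [List.getElem?_drop] at h1 h2
      have := hne _ h1 h2
      omega)
  obtain ⟨P, hPb, hPa⟩ := exists_stepsEq_eq (a := (b.take i).reverse) (b := (a.take i).reverse)
    (by simp [hla, hlb]) (fun j h1 h2 => by
      have hj : j < i := by
        have := (List.getElem?_eq_some_iff.1 h1).1
        simp at this; omega
      rw [List.getElem?_reverse (by simp; omega)] at h1 h2
      simp only [List.length_take, hla, hlb, min_eq_left hiN.le] at h1 h2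
      rw [List.getElem?_take_of_lt (by omega)] at h1 h2
      have := hne _ h2 h1
      omega)
  refine ⟨(P, Q), v, rfl, ?_, ?_⟩
  · rw [ha]
    simp only [pairTurns, Bool.not_true, hPa, hQa, List.reverse_reverse, ← hsplit a hai]
  · rw [hb]
    simp only [pairTurns, Bool.not_false, hPb, hQb, List.reverse_reverse, ← hsplit b hbi]

theorem ncard_dyckRS (N r s : ℕ) : (dyckRS (N + 2) r s).ncard = (gapPairs N r s).ncard := by
  have hlen : ∀ w P Q, w ∈ dyckRS (N + 2) r s → IsEncodedBy w (P, Q) →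
      P.length + Q.length = N := by
    intro w P Q hw h
    have := h.count_eq true
    have := hw.1.2.1
    omega
  choose! f hf using fun w (hw : w ∈ dyckRS (N + 2) r s) => exists_isEncodedBy_of_mem_dyckRS hw
  refine Set.ncard_congr (fun w _ => f w) (fun w hw => ?_) (fun w w' hw hw' h => ?_)
    fun x hx => ?_
  · have := (hf w hw).mem_dyckRS_iff r s
    rw [hlen w _ _ hw (hf w hw)] at this
    exact this.1 hw
  · exact (hf w hw).eq_of_eq (h ▸ hf w' hw')
  · obtain ⟨w, hwx⟩ := exists_isEncodedBy_of_mem_gapPairs hx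
    have := hwx.mem_dyckRS_iff r s
    rw [hx.1] at this
    have hw := this.2 hx
    exact ⟨w, hw, (hf w hw).pair_eq_of_eq hwx⟩

section GeneratingFunctions

open PowerSeries

/-- The generating function, by length, of the words satisfying `S`. -/
noncomputable def wordGF (S : List (Option Bool) → Prop) : PowerSeries ℚ :=
  PowerSeries.mk fun n => ({w | w.length = n ∧ S w}.ncard : ℚ)

theorem finite_words (S : List (Option Bool) → Prop) (n : ℕ) :
    {w | w.length = n ∧ S w}.Finite :=
  (List.finite_length_eq (Option Bool) n).subset fun _ h => h.1

open Classical in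
theorem ncard_words_succ (S : List (Option Bool) → Prop) (n : ℕ) :
    {w | w.length = n + 1 ∧ S w}.ncard = ∑ a : Option Bool,
      {w | w.length = n ∧ S (a :: w)}.ncard := by
  have hU : {w | w.length = n + 1 ∧ S w} = ↑(Finset.univ.biUnion fun a : Option Bool =>
      (finite_words (fun w => S (a :: w)) n).toFinset.image (List.cons a)) := by
    ext w
    rcases w with _ | ⟨a, w⟩ <;> simp
  rw [hU, Set.ncard_coe_finset, Finset.card_biUnion]
  · refine Finset.sum_congr rfl fun a _ => ?_
    rw [Finset.card_image_of_injective _ List.cons_injective,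
      ← Set.ncard_eq_toFinset_card _ (finite_words _ n)]
  · intro a _ b _ hab
    rw [Function.onFun, Finset.disjoint_left]
    intro w hw hw'
    simp only [Finset.mem_image] at hw hw'
    obtain ⟨u, -, rfl⟩ := hw
    obtain ⟨u', -, h⟩ := hw'
    exact hab (List.cons.inj h).1.symm

open Classical in
theorem wordGF_eq (S : List (Option Bool) → Prop) :
    wordGF S = (if S [] then 1 else 0) + X * (wordGF (fun w => S (none :: w)) +
      wordGF (fun w => S (some true :: w)) + wordGF (fun w => S (some false :: w))) := by
  ext n
  cases n with
  | zero =>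
    have : {w | w.length = 0 ∧ S w} = if S [] then {[]} else ∅ := by
      ext w
      split_ifs <;> simp <;> aesop
    rw [map_add, coeff_zero_X_mul, wordGF, coeff_mk, this]
    split_ifs <;> simp
  | succ n =>
    have : coeff (n + 1) (if S [] then (1 : PowerSeries ℚ) else 0) = 0 := by
      split_ifs <;> simp [coeff_one]
    rw [map_add, coeff_succ_X_mul, this]
    simp only [wordGF, coeff_mk, map_add, ncard_words_succ S n]
    simp [Fintype.sum_option]
    ring

theorem wordGF_false : wordGF (fun _ => False) = 0 := by
  ext n
  simp [wordGF]

theorem eq_zero_of_eq_X_mul {D : ℕ → PowerSeries ℚ} (a b c : ℕ → PowerSeries ℚ)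
    (h : ∀ t, D t = X * (a t * D (t - 1) + b t * D t + c t * D (t + 1))) (t : ℕ) : D t = 0 := by
  have key : ∀ n t, X ^ n ∣ D t := by
    intro n
    induction n with
    | zero => simp
    | succ n ih =>
      intro t
      rw [h t, pow_succ']
      exact mul_dvd_mul_left _ (((ih _).mul_left _).add ((ih _).mul_left _) |>.add
        ((ih _).mul_left _))
  ext n
  rw [map_zero]
  exact X_pow_dvd_iff.1 (key (n + 1) t) n (by omega)

theorem motzkinGF_eq_wordGF : motzkinGF = wordGF (IsMotzkinFrom 0) := by
  ext n
  simp only [motzkinGF, wordGF, motzkin, coeff_mk, isMotzkinWord_iff]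

theorem wordGF_isMotzkinFrom_zero :
    wordGF (IsMotzkinFrom 0) = 1 + X * (wordGF (IsMotzkinFrom 0) + wordGF (IsMotzkinFrom 1)) := by
  conv_lhs => rw [wordGF_eq]
  simp [IsMotzkinFrom, wordGF_false]

theorem wordGF_isMotzkinFrom_succ (t : ℕ) :
    wordGF (IsMotzkinFrom (t + 1)) = X * (wordGF (IsMotzkinFrom t) +
      wordGF (IsMotzkinFrom (t + 1)) + wordGF (IsMotzkinFrom (t + 2))) := by
  conv_lhs => rw [wordGF_eq]
  simp only [IsMotzkinFrom, Nat.succ_ne_zero, if_false, zero_add]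
  ring

theorem wordGF_isMotzkinFrom (t : ℕ) :
    wordGF (IsMotzkinFrom t) = motzkinGF * (X * motzkinGF) ^ t := by
  have key : ∀ t, X * motzkinGF * wordGF (IsMotzkinFrom t) - wordGF (IsMotzkinFrom (t + 1)) = 0 := by
    refine eq_zero_of_eq_X_mul (fun t => if t = 0 then 0 else 1) 1 1 fun t => ?_
    rw [motzkinGF_eq_wordGF]
    cases t with
    | zero =>
      have h0 := wordGF_isMotzkinFrom_zero
      have h1 := wordGF_isMotzkinFrom_succ 0
      simp only [zero_add, if_true, Pi.one_apply, zero_mul, one_mul] at *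
      linear_combination (X * wordGF (IsMotzkinFrom 0)) * h0 - h1
    | succ t =>
      have h1 := wordGF_isMotzkinFrom_succ t
      have h2 := wordGF_isMotzkinFrom_succ (t + 1)
      simp only [Nat.succ_ne_zero, if_false, Pi.one_apply, one_mul, Nat.add_sub_cancel] at *
      linear_combination (X * wordGF (IsMotzkinFrom 0)) * h1 - h2
  induction t with
  | zero => rw [motzkinGF_eq_wordGF, pow_zero, mul_one]
  | succ t ih => rw [← sub_eq_zero.1 (key t), ih]; ring

theorem motzkinGF_eq : motzkinGF = 1 + X * motzkinGF + X ^ 2 * motzkinGF ^ 2 := by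
  have h := wordGF_isMotzkinFrom_zero
  rw [wordGF_isMotzkinFrom, wordGF_isMotzkinFrom] at h
  linear_combination h

/-- The generating function of the lattice words from height `t` to `0` whose gap after the
first `d` down steps is `s`. -/
noncomputable def gapGF (s d t : ℕ) : PowerSeries ℚ :=
  wordGF fun w => IsMotzkinFrom t w ∧ gapAt d (stepsEq false w ++ [true]) = s

theorem gapAt_append_true_pos (l : List Bool) : gapAt 0 (l ++ [true]) ≠ 0 := by
  cases l with
  | nil => simp [gapAt]
  | cons a l => cases a <;> simp [gapAt]

theorem gapGF_one_zero (t : ℕ) : gapGF 1 0 t = (X * motzkinGF) ^ t := by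
  rw [gapGF, wordGF_eq]
  have h := fun w => gapAt_append_true_pos (stepsEq false w)
  simp only [stepsEq] at h
  cases t with
  | zero => simp [IsMotzkinFrom, gapAt, stepsEq, h, wordGF_false]
  | succ t =>
    simp [IsMotzkinFrom, gapAt, stepsEq, h, wordGF_false]
    rw [show (fun w => IsMotzkinFrom t w) = IsMotzkinFrom t from rfl, wordGF_isMotzkinFrom]
    ring

theorem gapGF_succ_zero (s t : ℕ) :
    gapGF (s + 2) 0 t = X * (gapGF (s + 1) 0 t + gapGF (s + 1) 0 (t + 1)) := by
  rw [gapGF, wordGF_eq]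
  simp [IsMotzkinFrom, gapAt, stepsEq, wordGF_false, gapGF]

theorem gapGF_succ_succ (s d t : ℕ) :
    gapGF s (d + 1) (t + 1) =
      X * (gapGF s d t + gapGF s (d + 1) (t + 1) + gapGF s (d + 1) (t + 2)) := by
  conv_lhs => rw [gapGF, wordGF_eq]
  simp [IsMotzkinFrom, gapAt, stepsEq, gapGF]
  ring

theorem gapGF_eq (s : ℕ) {d t : ℕ} (h : d ≤ t) :
    gapGF (s + 1) d t = X ^ s * (1 + X * motzkinGF) ^ s * (X * motzkinGF) ^ t := by
  induction d generalizing t with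
  | zero =>
    induction s generalizing t with
    | zero => simp [gapGF_one_zero]
    | succ s ih =>
      rw [gapGF_succ_zero, ih (by omega), ih (by omega)]
      ring
  | succ d ih =>
    have key : ∀ k, gapGF (s + 1) (d + 1) (d + k + 1) -
        X ^ s * (1 + X * motzkinGF) ^ s * (X * motzkinGF) ^ (d + k + 1) = 0 := by
      refine eq_zero_of_eq_X_mul 0 1 1 fun k => ?_
      have h1 := gapGF_succ_succ (s + 1) d (d + k)
      rw [ih (by omega)] at h1
      simp only [Pi.one_apply, Pi.zero_apply, ← add_assoc]
      linear_combination h1 - X ^ (s + 1) * (1 + X * motzkinGF) ^ s * (X * motzkinGF) ^ (d + k) *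
        motzkinGF_eq
    obtain ⟨k, rfl⟩ : ∃ k, t = d + k + 1 := ⟨t - (d + 1), by omega⟩
    exact sub_eq_zero.1 (key k)

theorem ncard_gapPairs (N r s : ℕ) :
    ((gapPairs N r s).ncard : ℚ) =
      ∑ h ∈ Finset.range (N + 1), coeff N (gapGF r h h * gapGF s h h) := by
  classical
  let F : ℕ → ℕ → ℕ → Finset (List (Option Bool)) := fun s h n =>
    (finite_words (fun w => IsMotzkinFrom h w ∧ gapAt h (stepsEq false w ++ [true]) = s) n).toFinset
  have hF : ∀ s h n, (F s h n).card = coeff n (gapGF s h h) := by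
    intro s h n
    rw [gapGF, wordGF, coeff_mk, Set.ncard_eq_toFinset_card _ (finite_words _ n)]
  have hU : gapPairs N r s = ↑((Finset.range (N + 1) ×ˢ Finset.HasAntidiagonal.antidiagonal N).biUnion
      fun z => F r z.1 z.2.1 ×ˢ F s z.1 z.2.2) := by
    ext ⟨P, Q⟩
    simp only [gapPairs, Set.mem_ofPred_eq, Finset.coe_biUnion, Set.mem_iUnion, Finset.mem_coe,
      Finset.mem_product, F, Set.Finite.mem_toFinset, Finset.mem_range,
      Finset.HasAntidiagonal.mem_antidiagonal, Prod.exists]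
    constructor
    · rintro ⟨hN, h, hP, hQ⟩
      refine ⟨h, P.length, Q.length, ⟨?_, hN⟩, ⟨rfl, hP⟩, rfl, hQ⟩
      have := hP.1.le_length
      omega
    · rintro ⟨h, _, _, ⟨-, hN⟩, ⟨rfl, hP⟩, rfl, hQ⟩
      exact ⟨hN, h, hP, hQ⟩
  rw [hU, Set.ncard_coe_finset, Finset.card_biUnion]
  · push_cast
    rw [Finset.sum_product]
    refine Finset.sum_congr rfl fun h _ => ?_
    rw [coeff_mul]
    refine Finset.sum_congr rfl fun z _ => ?_
    rw [Finset.card_product, Nat.cast_mul, hF, hF]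
  · rintro ⟨h, a, b⟩ - ⟨h', a', b'⟩ - hne
    rw [Function.onFun, Finset.disjoint_left]
    rintro ⟨P, Q⟩ h1 h2
    simp only [Finset.mem_product, F, Set.Finite.mem_toFinset, Set.mem_ofPred_eq] at h1 h2
    obtain ⟨⟨rfl, hP, -⟩, rfl, -⟩ := h1
    obtain ⟨⟨rfl, hP', -⟩, rfl, -⟩ := h2
    exact hne (by rw [hP.eq hP'])

theorem one_add_derivative_mul :
    (1 + X ^ 2 * PowerSeries.derivative ℚ (X * motzkinGF)) * (1 - (X * motzkinGF) ^ 2) = 1 := by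
  have hm := motzkinGF_eq
  have hd := congrArg (PowerSeries.derivative ℚ) (show X * motzkinGF =
    X * (1 + X * motzkinGF + (X * motzkinGF) ^ 2) by linear_combination X * hm)
  have hX : PowerSeries.derivative ℚ (X : PowerSeries ℚ) = 1 := derivative_X
  rw [(PowerSeries.derivative ℚ).leibniz X (1 + X * motzkinGF + (X * motzkinGF) ^ 2), hX] at hd
  simp only [map_add, Derivation.leibniz_pow, smul_eq_mul, Derivation.map_one_eq_zero, zero_add,
    nsmul_eq_mul, Nat.cast_ofNat, pow_one, mul_one, Nat.add_one_sub_one] at hd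
  linear_combination X ^ 2 * motzkinGF * hd -
    X ^ 2 * (PowerSeries.derivative ℚ (X * motzkinGF) + motzkinGF) * hm

end GeneratingFunctions

open PowerSeries in
/-- **Corollary (generating function for `|𝒟ₙ^{r,s}|`).**
`Σ |𝒟ₙ^{r,s}| xⁿ = x^{r+s}·(1 + x·m(x))^{r+s-2}·(1 + x²·(x·m(x))′)`. -/
theorem dyckRS_gf (r s : ℕ) (hr : 1 ≤ r) (hs : 1 ≤ s) :
    PowerSeries.mk (fun n => ((dyckRS n r s).ncard : ℚ)) =
      X ^ (r + s) * (1 + X * motzkinGF) ^ (r + s - 2) *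
        (1 + X ^ 2 * PowerSeries.derivative ℚ (X * motzkinGF)) := by
  obtain ⟨r, rfl⟩ := Nat.exists_eq_add_of_le' hr
  obtain ⟨s, rfl⟩ := Nat.exists_eq_add_of_le' hs
  have hrs : X ^ (r + 1 + (s + 1)) * (1 + X * motzkinGF) ^ (r + 1 + (s + 1) - 2) *
        (1 + X ^ 2 * PowerSeries.derivative ℚ (X * motzkinGF)) =
      X ^ 2 * (X ^ (r + s) * (1 + X * motzkinGF) ^ (r + s) *
        (1 + X ^ 2 * PowerSeries.derivative ℚ (X * motzkinGF))) := by
    rw [show r + 1 + (s + 1) - 2 = r + s by omega]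
    ring
  rw [hrs]
  have hinv := one_add_derivative_mul
  generalize 1 + X ^ 2 * PowerSeries.derivative ℚ (X * motzkinGF) = Z at hinv
  ext n
  rw [coeff_mk, coeff_X_pow_mul']
  rcases lt_or_ge n 2 with hn | hn
  · have hempty : dyckRS n (r + 1) (s + 1) = ∅ := by
      rw [Set.eq_empty_iff_forall_notMem]
      rintro w ⟨-, i, hi, -⟩
      rw [Finset.mem_Icc] at hi
      omega
    rw [hempty, if_neg (by omega), Set.ncard_empty, Nat.cast_zero]
  · obtain ⟨N, rfl⟩ := Nat.exists_eq_add_of_le' hn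
    rw [if_pos hn, Nat.add_sub_cancel, ncard_dyckRS, ncard_gapPairs, ← map_sum]
    have hgeom := mul_neg_geom_sum ((X * motzkinGF) ^ 2) (N + 1)
    have hZ : Z = ∑ h ∈ Finset.range (N + 1), ((X * motzkinGF) ^ 2) ^ h +
        Z * ((X * motzkinGF) ^ 2) ^ (N + 1) := by
      linear_combination (∑ h ∈ Finset.range (N + 1), ((X * motzkinGF) ^ 2) ^ h) * hinv - Z * hgeom
    have hdvd : X ^ (N + 1) ∣ X ^ (r + s) * (1 + X * motzkinGF) ^ (r + s) *
        (Z * ((X * motzkinGF) ^ 2) ^ (N + 1)) := by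
      refine Dvd.dvd.mul_left (Dvd.dvd.mul_left (pow_dvd_pow_of_dvd ?_ _) _) _
      exact (dvd_mul_right X motzkinGF).trans (dvd_pow_self _ two_ne_zero)
    rw [hZ, mul_add, map_add, X_pow_dvd_iff.1 hdvd N (Nat.lt_succ_self N), add_zero,
      Finset.mul_sum]
    congr 1
    refine Finset.sum_congr rfl fun h _ => ?_
    rw [gapGF_eq r le_rfl, gapGF_eq s le_rfl]
    ring
end

section
/- For all integers r ≥ 1, s ≥ 1, and n ≥ r+s, the number of Dyck paths D ∈ D_n^{r,s} that have exactly two returns equals T_{n-2, r+s-1}. -/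
/-! ### Letters of a word and their positions -/

section Letters

variable {α : Type*} [DecidableEq α] [BEq α] [LawfulBEq α]

theorem count_take_eq_natCount (w : List α) (x : α) (k : ℕ) :
    (w.take k).count x = Nat.count (fun t => w[t]? = some x) k := by
  induction k with
  | zero => simp
  | succ k ih =>
    rw [List.take_add_one, List.count_append, ih, Nat.count_succ]
    congr 1
    rcases h : w[k]? with _ | y
    · simp
    · simp [List.count_singleton]

theorem count_eq_natCount (w : List α) (x : α) :
    w.count x = Nat.count (fun t => w[t]? = some x) w.length := by
  rw [← count_take_eq_natCount, List.take_length]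

/-- Counting `x` in a factor of `w`. -/
theorem count_drop_take (w : List α) (x : α) {m k : ℕ} (h : m ≤ k) :
    ((w.take k).drop m).count x =
      Nat.count (fun t => w[t]? = some x) k - Nat.count (fun t => w[t]? = some x) m := by
  have := congrArg (List.count x) (List.take_append_drop m (w.take k))
  rw [List.count_append, List.take_take, min_eq_left h, count_take_eq_natCount,
    count_take_eq_natCount] at this
  omega

theorem findIdxs_getD_spec (w : List α) (x : α) (i : ℕ) (h : i < w.count x) :
    w[(w.findIdxs (· == x)).getD i 0]? = some x ∧
      (w.take ((w.findIdxs (· == x)).getD i 0)).count x = i := by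
  induction w generalizing i with
  | nil => simp at h
  | cons y w ih =>
    have key : ∀ j, j < w.count x → (w.findIdxs (· == x) 1).getD j 0 =
        (w.findIdxs (· == x)).getD j 0 + 1 := by
      intro j hj
      have hl : j < (w.findIdxs (· == x)).length := by
        rw [List.length_findIdxs]; exact hj
      rw [List.findIdxs_start, List.getD_eq_getElem?_getD, List.getD_eq_getElem?_getD,
        List.getElem?_map, List.getElem?_eq_getElem hl]
      rfl
    rw [List.findIdxs_cons]
    by_cases hy : y = x
    · subst hy
      rcases i with _ | i
      · simp
      · have hi : i < w.count y := by simpa using h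
        have := ih i hi
        simp only [beq_self_eq_true, if_true, List.getD_cons_succ, zero_add]
        rw [key i hi]
        simpa using this
    · have hi : i < w.count x := by simpa [List.count_cons, hy] using h
      have := ih i hi
      simp only [beq_iff_eq, hy, if_false, zero_add]
      rw [key i hi]
      simpa [List.count_cons, hy] using this

end Letters

theorem natCount_true_add_natCount_false (w : List Bool) {k : ℕ} (h : k ≤ w.length) :
    Nat.count (fun t => w[t]? = some true) k + Nat.count (fun t => w[t]? = some false) k = k := by
  rw [← count_take_eq_natCount, ← count_take_eq_natCount, List.count_true_add_count_false,
    List.length_take, min_eq_left h]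

/-! ### The profile of a Dyck word -/

/-- `profile w i` is the number of down steps preceding the up step with 0-based number `i`. -/
def profile (w : List Bool) (i : ℕ) : ℕ := (upIdxs w).getD i 0 - i

namespace IsDyckWord

variable {n : ℕ} {w : List Bool}

theorem natCount_false_le (hw : IsDyckWord n w) (k : ℕ) :
    Nat.count (fun t => w[t]? = some false) k ≤ Nat.count (fun t => w[t]? = some true) k := by
  rw [← count_take_eq_natCount, ← count_take_eq_natCount]
  exact hw.2.2.2 _ (List.take_prefix _ _)

theorem natCount_le (hw : IsDyckWord n w) (x : Bool) (k : ℕ) :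
    Nat.count (fun t => w[t]? = some x) k ≤ n := by
  rw [← count_take_eq_natCount]
  have := (List.take_sublist k w).count_le x
  rcases x <;> have := hw.2.1 <;> have := hw.2.2.1 <;> omega

theorem upIdxs_spec (hw : IsDyckWord n w) {i : ℕ} (hi : i < n) :
    w[(upIdxs w).getD i 0]? = some true ∧
    Nat.count (fun t => w[t]? = some true) ((upIdxs w).getD i 0) = i := by
  rw [← count_take_eq_natCount]
  exact findIdxs_getD_spec w true i (by rw [hw.2.1]; exact hi)

theorem downIdxs_spec (hw : IsDyckWord n w) {i : ℕ} (hi : i < n) :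
    w[(downIdxs w).getD i 0]? = some false ∧
    Nat.count (fun t => w[t]? = some false) ((downIdxs w).getD i 0) = i := by
  rw [← count_take_eq_natCount]
  exact findIdxs_getD_spec w false i (by rw [hw.2.2.1]; exact hi)

theorem natCount_false_upIdxs (hw : IsDyckWord n w) {i : ℕ} (hi : i < n) :
    Nat.count (fun t => w[t]? = some false) ((upIdxs w).getD i 0) = profile w i ∧
      (upIdxs w).getD i 0 = i + profile w i := by
  obtain ⟨h1, h2⟩ := hw.upIdxs_spec hi
  have h3 := natCount_true_add_natCount_false w (k := (upIdxs w).getD i 0)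
    (List.getElem?_eq_some_iff.mp h1).1.le
  unfold profile
  omega

theorem profile_le (hw : IsDyckWord n w) {i : ℕ} (hi : i < n) : profile w i ≤ i := by
  rw [← (hw.natCount_false_upIdxs hi).1]
  exact (hw.natCount_false_le _).trans (hw.upIdxs_spec hi).2.le

theorem upIdxs_lt (hw : IsDyckWord n w) {i k : ℕ} (hik : i < k) (hk : k < n) :
    (upIdxs w).getD i 0 < (upIdxs w).getD k 0 := by
  by_contra! h
  have := Nat.count_monotone (fun t => w[t]? = some true) h
  rw [(hw.upIdxs_spec hk).2, (hw.upIdxs_spec (hik.trans hk)).2] at this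
  omega

theorem downIdxs_lt (hw : IsDyckWord n w) {i k : ℕ} (hik : i < k) (hk : k < n) :
    (downIdxs w).getD i 0 < (downIdxs w).getD k 0 := by
  by_contra! h
  have := Nat.count_monotone (fun t => w[t]? = some false) h
  rw [(hw.downIdxs_spec hk).2, (hw.downIdxs_spec (hik.trans hk)).2] at this
  omega

theorem profile_mono (hw : IsDyckWord n w) {i k : ℕ} (hik : i ≤ k) (hk : k < n) :
    profile w i ≤ profile w k := by
  rcases hik.eq_or_lt with rfl | hlt
  · rfl
  rw [← (hw.natCount_false_upIdxs hk).1, ← (hw.natCount_false_upIdxs (hlt.trans hk)).1]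
  exact Nat.count_monotone _ (hw.upIdxs_lt hlt hk).le

theorem rStat_eq (hw : IsDyckWord n w) {i : ℕ} (hi : 1 ≤ i) (hin : i < n) :
    rStat w i = profile w i - profile w (i - 1) := by
  unfold rStat
  have h1 := hw.upIdxs_lt (i := i - 1) (k := i) (by omega) hin
  rw [count_drop_take _ _ h1, (hw.natCount_false_upIdxs hin).1, Nat.count_succ,
    (hw.natCount_false_upIdxs (i := i - 1) (by omega)).1,
    (hw.upIdxs_spec (i := i - 1) (by omega)).1]
  simp

/-- The up steps preceding a given down step, in terms of the profile. -/
theorem natCount_true_downIdxs (hw : IsDyckWord n w) {j : ℕ} (hj : j < n) :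
    Nat.count (fun t => w[t]? = some true) ((downIdxs w).getD j 0) =
      ((Finset.range n).filter fun i => profile w i ≤ j).card := by
  obtain ⟨hd, hc⟩ := hw.downIdxs_spec hj
  set d := (downIdxs w).getD j 0
  have hle := hw.natCount_le true d
  have : (Finset.range n).filter (fun i => profile w i ≤ j) =
      Finset.range (Nat.count (fun t => w[t]? = some true) d) := by
    ext i
    simp only [Finset.mem_filter, Finset.mem_range]
    constructor
    · rintro ⟨hi, hp⟩
      obtain ⟨hu, hcu⟩ := hw.upIdxs_spec hi
      have hf := (hw.natCount_false_upIdxs hi).1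
      rcases lt_trichotomy ((upIdxs w).getD i 0) d with h | h | h
      · have := Nat.count_strict_mono (p := fun t => w[t]? = some true) hu h
        omega
      · rw [h, hd] at hu
        simp at hu
      · have := Nat.count_strict_mono (p := fun t => w[t]? = some false) hd h
        omega
    · intro hi
      have hin : i < n := by omega
      refine ⟨hin, ?_⟩
      have hf := (hw.natCount_false_upIdxs hin).1
      by_contra! hp
      have h : d ≤ (upIdxs w).getD i 0 := by
        by_contra! h
        have := Nat.count_monotone (fun t => w[t]? = some false) h.le
        omega
      have := Nat.count_monotone (fun t => w[t]? = some true) h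
      have := (hw.upIdxs_spec hin).2
      omega
  rw [this, Finset.card_range]

theorem sStat_eq (hw : IsDyckWord n w) {j : ℕ} (hj : 1 ≤ j) (hjn : j < n) :
    sStat w j = ((Finset.range n).filter fun i => profile w i = j).card := by
  unfold sStat
  have h1 := hw.downIdxs_lt (i := j - 1) (k := j) (by omega) hjn
  rw [count_drop_take _ _ h1, hw.natCount_true_downIdxs hjn, Nat.count_succ,
    hw.natCount_true_downIdxs (j := j - 1) (by omega),
    (hw.downIdxs_spec (i := j - 1) (by omega)).1]
  have : (Finset.range n).filter (fun i => profile w i ≤ j) =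
      (Finset.range n).filter (fun i => profile w i ≤ j - 1) ∪
      (Finset.range n).filter (fun i => profile w i = j) := by
    ext i
    simp only [Finset.mem_filter, Finset.mem_union]
    grind
  rw [this, Finset.card_union_of_disjoint]
  · simp
  · rw [Finset.disjoint_filter]
    intros
    omega

theorem return_iff (hw : IsDyckWord n w) {k : ℕ} (hkn : k < n) :
    (w.take (2 * k)).count false = (w.take (2 * k)).count true ↔ profile w k = k := by
  have hlen := hw.1
  rw [count_take_eq_natCount, count_take_eq_natCount]
  have hs := natCount_true_add_natCount_false w (k := 2 * k) (by omega)
  obtain ⟨hu, hcu⟩ := hw.upIdxs_spec hkn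
  obtain ⟨hf, hp⟩ := hw.natCount_false_upIdxs hkn
  constructor
  · intro h
    have ht : w[2 * k]? = some true := by
      rcases hx : w[2 * k]? with _ | x
      · rw [List.getElem?_eq_none_iff] at hx
        omega
      · rcases x
        · have := hw.natCount_false_le (2 * k + 1)
          rw [Nat.count_succ, Nat.count_succ, hx] at this
          simp at this
          omega
        · rfl
    have := Nat.count_injective (p := fun t => w[t]? = some true) hu ht (by omega)
    omega
  · intro h
    rw [hp, h] at hcu
    rw [← two_mul] at hcu
    omega

theorem eq_of_profile_eq (hw : IsDyckWord n w) {w' : List Bool} (hw' : IsDyckWord n w')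
    (h : ∀ i < n, profile w i = profile w' i) : w = w' := by
  have mem_iff : ∀ {v : List Bool}, IsDyckWord n v → ∀ k, v[k]? = some true ↔
      ∃ i < n, i + profile v i = k := by
    intro v hv k
    constructor
    · intro hk
      have hlt : Nat.count (fun t => v[t]? = some true) k < n := by
        have := Nat.count_strict_mono (p := fun t => v[t]? = some true) hk (Nat.lt_add_one k)
        have := hv.natCount_le true (k + 1)
        omega
      refine ⟨_, hlt, ?_⟩
      rw [← (hv.natCount_false_upIdxs hlt).2]
      exact Nat.count_injective (p := fun t => v[t]? = some true) (hv.upIdxs_spec hlt).1 hk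
        (hv.upIdxs_spec hlt).2
    · rintro ⟨i, hi, rfl⟩
      rw [← (hv.natCount_false_upIdxs hi).2]
      exact (hv.upIdxs_spec hi).1
  have hiff : ∀ k : ℕ, w[k]? = some true ↔ w'[k]? = some true := by
    intro k
    rw [mem_iff hw, mem_iff hw']
    constructor
    · rintro ⟨i, hi, hk⟩
      exact ⟨i, hi, by rw [← h i hi]; exact hk⟩
    · rintro ⟨i, hi, hk⟩
      exact ⟨i, hi, by rw [h i hi]; exact hk⟩
  refine List.ext_getElem (hw.1.trans hw'.1.symm) fun k h1 h2 => ?_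
  have := hiff k
  rw [List.getElem?_eq_getElem h1, List.getElem?_eq_getElem h2] at this
  simp only [Option.some.injEq] at this
  exact Bool.eq_iff_iff.mpr this

end IsDyckWord

/-- Every weakly increasing sequence below the diagonal is the profile of a Dyck word. -/
theorem exists_isDyckWord_profile_eq {n : ℕ} {f : ℕ → ℕ} (hmono : Monotone f)
    (hle : ∀ i < n, f i ≤ i) : ∃ w, IsDyckWord n w ∧ ∀ i < n, profile w i = f i := by
  classical
  have hstrict : StrictMono fun i => i + f i := fun i k h =>
    add_lt_add_of_lt_of_le h (hmono h.le)
  set w : List Bool := (List.range (2 * n)).map fun k => decide (∃ i < n, i + f i = k) with hwdef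
  have hlen : w.length = 2 * n := by simp [hwdef]
  have hget : ∀ k, w[k]? = some true ↔ ∃ i < n, i + f i = k := by
    intro k
    rw [hwdef, List.getElem?_map]
    by_cases hk : k < 2 * n
    · rw [List.getElem?_range hk]
      simp
    · rw [List.getElem?_eq_none (by simpa using hk)]
      simp only [Option.map_none, reduceCtorEq, false_iff]
      rintro ⟨i, hi, h⟩
      have := hle i hi
      omega
  have hcount : ∀ i ≤ n, Nat.count (fun t => w[t]? = some true) (i + f i) = i := by
    intro i hi
    rw [Nat.count_eq_card_filter_range]
    have : (Finset.range (i + f i)).filter (fun t => w[t]? = some true) =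
        (Finset.range i).image fun j => j + f j := by
      ext t
      simp only [Finset.mem_filter, Finset.mem_image, Finset.mem_range, hget]
      constructor
      · rintro ⟨ht, j, hj, rfl⟩
        exact ⟨j, hstrict.lt_iff_lt.mp ht, rfl⟩
      · rintro ⟨j, hj, rfl⟩
        exact ⟨hstrict hj, j, by omega, rfl⟩
    rw [this, Finset.card_image_of_injective _ hstrict.injective, Finset.card_range]
  have htotal : Nat.count (fun t => w[t]? = some true) (2 * n) = n := by
    rw [Nat.count_eq_card_filter_range]
    have : (Finset.range (2 * n)).filter (fun t => w[t]? = some true) =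
        (Finset.range n).image fun j => j + f j := by
      ext t
      simp only [Finset.mem_filter, Finset.mem_image, Finset.mem_range, hget]
      constructor
      · rintro ⟨ht, j, hj, rfl⟩
        exact ⟨j, hj, rfl⟩
      · rintro ⟨j, hj, rfl⟩
        exact ⟨by have := hle j hj; omega, j, by omega, rfl⟩
    rw [this, Finset.card_image_of_injective _ hstrict.injective, Finset.card_range]
  have hsum := natCount_true_add_natCount_false w hlen.ge
  have hdyck : IsDyckWord n w := by
    refine ⟨hlen, ?_, ?_, ?_⟩
    · rw [count_eq_natCount, hlen, htotal]
    · rw [count_eq_natCount, hlen]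
      omega
    · intro p hp
      rw [List.prefix_iff_eq_take.mp hp, count_take_eq_natCount, count_take_eq_natCount]
      have hk : p.length ≤ w.length := hp.length_le
      generalize p.length = k at hk ⊢
      have hs := natCount_true_add_natCount_false w hk
      set t := Nat.count (fun t => w[t]? = some true) k with ht
      by_cases htn : t < n
      · have hkt : k ≤ t + f t := by
          by_contra! h
          have := Nat.count_strict_mono (p := fun t => w[t]? = some true)
            ((hget _).2 ⟨t, htn, rfl⟩) h
          rw [hcount t htn.le] at this
          omega
        have := hle t htn
        omega
      · omega
  refine ⟨w, hdyck, fun i hi => ?_⟩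
  obtain ⟨hu, hcu⟩ := hdyck.upIdxs_spec hi
  have := Nat.count_injective (p := fun t => w[t]? = some true) hu ((hget _).2 ⟨i, hi, rfl⟩)
    (by rw [hcu, hcount i hi.le])
  unfold profile
  omega

/-! ### Dyck words and pairs of step sets -/

theorem natCount_eq_of_forall_not {p : ℕ → Prop} [DecidablePred p] {m k : ℕ} (hmk : m ≤ k)
    (h : ∀ j, m ≤ j → j < k → ¬ p j) : Nat.count p k = Nat.count p m := by
  induction k, hmk using Nat.le_induction with
  | base => rfl
  | succ k hk ih =>
    rw [Nat.count_succ, if_neg (h k hk (by omega)), add_zero, ih fun j h1 h2 => h j h1 (by omega)]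

/-- The predicates `a` and `b` describe, in the range `1 ≤ i < n`, the supports of the statistics
`rStat w` and `sStat w`. Outside of this range they are normalised. -/
structure HasSupports (n : ℕ) (w : List Bool) (a b : ℕ → Prop) : Prop where
  isDyckWord : IsDyckWord n w
  iff_rStat : ∀ i, 1 ≤ i → i < n → (a i ↔ 0 < rStat w i)
  iff_sStat : ∀ i, 1 ≤ i → i < n → (b i ↔ 0 < sStat w i)
  not_zero : ¬ a 0
  zero : b 0
  of_ge : ∀ i, n ≤ i → b i

namespace HasSupports

variable {n : ℕ} {w : List Bool} {a b : ℕ → Prop}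

theorem iff_profile_lt (h : HasSupports n w a b) {i : ℕ} (hi : i + 1 < n) :
    a (i + 1) ↔ profile w i < profile w (i + 1) := by
  rw [h.iff_rStat _ (by omega) hi, h.isDyckWord.rStat_eq (by omega) hi, Nat.add_sub_cancel]
  omega

theorem iff_exists_profile_eq (h : HasSupports n w a b) {j : ℕ} (hj : j < n) :
    b j ↔ ∃ i < n, profile w i = j := by
  rcases Nat.eq_zero_or_pos j with rfl | hpos
  · have := h.isDyckWord.profile_le hj
    exact iff_of_true h.zero ⟨0, hj, by omega⟩
  · rw [h.iff_sStat j hpos hj, h.isDyckWord.sStat_eq hpos hj, Finset.card_pos]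
    simp [Finset.Nonempty]

theorem profile_mem (h : HasSupports n w a b) {i : ℕ} (hi : i < n) : b (profile w i) :=
  (h.iff_exists_profile_eq ((h.isDyckWord.profile_le hi).trans_lt hi)).2 ⟨i, hi, rfl⟩

variable [DecidablePred a] [DecidablePred b]

theorem count_profile (h : HasSupports n w a b) {i : ℕ} (hi : i < n) :
    Nat.count b (profile w i) = Nat.count a (i + 1) := by
  induction i with
  | zero =>
    have := h.isDyckWord.profile_le hi
    rw [Nat.le_zero.mp this, Nat.count_succ, if_neg h.not_zero]
    simp
  | succ i ih =>
    have ih := ih (by omega)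
    rw [Nat.count_succ, ← ih]
    by_cases ha : a (i + 1)
    · rw [if_pos ha]
      have hlt := (h.iff_profile_lt hi).1 ha
      rw [natCount_eq_of_forall_not (m := profile w i + 1) hlt, Nat.count_succ,
        if_pos (h.profile_mem (by omega))]
      intro j h1 h2 hb
      have hjn : j < n := by
        have := h.isDyckWord.profile_le hi
        omega
      obtain ⟨k, hk, rfl⟩ := (h.iff_exists_profile_eq hjn).1 hb
      rcases Nat.lt_or_ge i k with hik | hik
      · have := h.isDyckWord.profile_mono (i := i + 1) hik hk
        omega
      · have := h.isDyckWord.profile_mono hik (by omega)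
        omega
    · rw [if_neg ha]
      have h1 := mt (h.iff_profile_lt hi).2 ha
      have h2 := h.isDyckWord.profile_mono (Nat.le_add_right i 1) hi
      rw [show profile w (i + 1) = profile w i by omega, add_zero]

theorem profile_eq_nth (h : HasSupports n w a b) {i : ℕ} (hi : i < n) :
    profile w i = Nat.nth b (Nat.count a (i + 1)) := by
  rw [← h.count_profile hi, Nat.nth_count (h.profile_mem hi)]

theorem count_lt_count (h : HasSupports n w a b) {i : ℕ} (hi : i < n) :
    Nat.count a (i + 1) < Nat.count b (i + 1) := by
  rw [← h.count_profile hi]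
  exact Nat.count_strict_mono (h.profile_mem hi) (Nat.lt_succ_of_le (h.isDyckWord.profile_le hi))

theorem count_eq_count_add_one (h : HasSupports n w a b) (hn : 0 < n) :
    Nat.count b n = Nat.count a n + 1 := by
  obtain ⟨m, rfl⟩ := Nat.exists_eq_succ_of_ne_zero hn.ne'
  have hm : m < m + 1 := Nat.lt_add_one m
  have hle := h.isDyckWord.profile_le hm
  rw [Nat.succ_eq_add_one, ← h.count_profile hm,
    natCount_eq_of_forall_not (m := profile w m + 1) (by omega), Nat.count_succ,
    if_pos (h.profile_mem hm)]
  intro j h1 h2 hb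
  obtain ⟨k, hk, rfl⟩ := (h.iff_exists_profile_eq h2).1 hb
  have := h.isDyckWord.profile_mono (i := k) (k := m) (by omega) hm
  omega

theorem profile_eq_self_iff (h : HasSupports n w a b) {i : ℕ} (hi : i < n) (hb : b i) :
    profile w i = i ↔ Nat.count b i = Nat.count a (i + 1) := by
  constructor
  · intro hp
    rw [← h.count_profile hi, hp]
  · intro hc
    rw [h.profile_eq_nth hi, ← hc, Nat.nth_count hb]

end HasSupports

theorem exists_hasSupports {n : ℕ} {a b : ℕ → Prop} [DecidablePred a] [DecidablePred b]
    (hn : 0 < n) (ha : ¬ a 0) (hb : b 0) (hbn : ∀ i, n ≤ i → b i)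
    (hlt : ∀ i < n, Nat.count a (i + 1) < Nat.count b (i + 1))
    (heq : Nat.count b n = Nat.count a n + 1) : ∃ w, HasSupports n w a b := by
  have hinf : (Set.ofPred b).Infinite := Set.infinite_of_forall_exists_gt fun m =>
    ⟨n + m + 1, hbn _ (by omega), by omega⟩
  obtain ⟨w, hw, hf⟩ := exists_isDyckWord_profile_eq (n := n)
    (f := fun i => Nat.nth b (Nat.count a (i + 1)))
    (fun i k hik => (Nat.nth_strictMono hinf).monotone (Nat.count_monotone a (by omega)))
    (fun i hi => Nat.lt_succ_iff.mp (Nat.nth_lt_of_lt_count (hlt i hi)))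
  refine ⟨w, hw, fun i h1 hi => ?_, fun j h1 hj => ?_, ha, hb, hbn⟩
  · obtain ⟨i, rfl⟩ := Nat.exists_eq_add_of_le' h1
    rw [hw.rStat_eq h1 hi, hf _ hi, Nat.add_sub_cancel, hf i (by omega), Nat.sub_pos_iff_lt,
      (Nat.nth_strictMono hinf).lt_iff_lt, Nat.count_succ a (i + 1)]
    by_cases h : a (i + 1) <;> simp [h]
  · rw [hw.sStat_eq h1 hj, Finset.card_pos]
    constructor
    · intro hbj
      have hcj : Nat.count b j ≤ Nat.count a n := by
        have := Nat.count_strict_mono hbj hj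
        omega
      have hex : ∃ k, Nat.count b j ≤ Nat.count a (k + 1) :=
        ⟨n, hcj.trans (Nat.count_monotone a (by omega))⟩
      classical
      have hfind := Nat.find_spec hex
      have hmin := fun m => Nat.find_min hex (m := m)
      generalize Nat.find hex = k at hfind hmin
      have hkn : k < n := by
        by_contra! hk
        have := hmin (n - 1) (by omega)
        rw [Nat.sub_add_cancel hn] at this
        exact this hcj
      have hk : Nat.count a (k + 1) = Nat.count b j := by
        refine le_antisymm ?_ hfind
        rcases k with _ | k
        · simp [Nat.count_succ, ha]
        · have := hmin k (by omega)
          rw [Nat.count_succ]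
          split <;> omega
      refine ⟨k, Finset.mem_filter.mpr ⟨Finset.mem_range.mpr hkn, ?_⟩⟩
      rw [hf k hkn, hk, Nat.nth_count hbj]
    · rintro ⟨k, hk⟩
      rw [Finset.mem_filter, Finset.mem_range] at hk
      rw [← hk.2, hf k hk.1]
      exact Nat.nth_mem_of_infinite hinf _

namespace HasSupports

variable {n : ℕ} {w : List Bool} {a b : ℕ → Prop}

theorem eq_word (h : HasSupports n w a b) {w' : List Bool} (h' : HasSupports n w' a b) :
    w = w' := by
  classical
  exact h.isDyckWord.eq_of_profile_eq h'.isDyckWord fun i hi => by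
    rw [h.profile_eq_nth hi, h'.profile_eq_nth hi]

/-- At a return, `rStat` measures the distance to the previous element of the support of `sStat`. -/
theorem rStat_spec (h : HasSupports n w a b) {i : ℕ} (h1 : 1 ≤ i) (hi : i < n)
    (hp : profile w i = i) :
    rStat w i ≤ i ∧ b (i - rStat w i) ∧ ∀ j, i - rStat w i < j → j < i → ¬ b j := by
  have hle := h.isDyckWord.profile_le (i := i - 1) (by omega)
  rw [h.isDyckWord.rStat_eq h1 hi, hp, show i - (i - profile w (i - 1)) = profile w (i - 1) by omega]
  refine ⟨by omega, h.profile_mem (by omega), fun j h2 h3 hb => ?_⟩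
  obtain ⟨k, hk, rfl⟩ := (h.iff_exists_profile_eq (by omega)).1 hb
  rcases Nat.lt_or_ge k i with hki | hki
  · have := h.isDyckWord.profile_mono (i := k) (k := i - 1) (by omega) (by omega)
    omega
  · have := h.isDyckWord.profile_mono hki hk
    omega

/-- At a return, `sStat` measures the distance to the next element of the support of `rStat`. -/
theorem sStat_spec (h : HasSupports n w a b) {i : ℕ} (h1 : 1 ≤ i) (hi : i < n)
    (hp : profile w i = i) :
    i + sStat w i ≤ n ∧ (∀ j, i < j → j < i + sStat w i → ¬ a j) ∧
      (i + sStat w i < n → a (i + sStat w i)) := by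
  classical
  have hex : ∃ e, i < e ∧ (e = n ∨ i < profile w e) := ⟨n, hi, Or.inl rfl⟩
  obtain ⟨hie, he⟩ := Nat.find_spec hex
  have hen : Nat.find hex ≤ n := Nat.find_min' hex ⟨hi, Or.inl rfl⟩
  have hmin := fun m => Nat.find_min hex (m := m)
  generalize Nat.find hex = e at hie he hen hmin
  have heq : ∀ k, i ≤ k → k < e → profile w k = i := by
    intro k hik hke
    have hmono := h.isDyckWord.profile_mono hik (by omega)
    rcases hik.eq_or_lt with rfl | hlt
    · exact hp
    · have := hmin k hke
      push Not at this
      have := (this hlt).2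
      omega
  have hs : sStat w i = e - i := by
    rw [h.isDyckWord.sStat_eq h1 hi, ← Nat.card_Ico]
    congr 1
    ext k
    simp only [Finset.mem_filter, Finset.mem_range, Finset.mem_Ico]
    constructor
    · rintro ⟨hk, hpk⟩
      have := h.isDyckWord.profile_le hk
      refine ⟨by omega, ?_⟩
      by_contra! hek
      have := h.isDyckWord.profile_mono hek hk
      omega
    · rintro ⟨hik, hke⟩
      exact ⟨by omega, heq k hik hke⟩
  rw [hs, show i + (e - i) = e by omega]
  refine ⟨hen, fun j hij hje => ?_, fun hlt => ?_⟩
  · obtain ⟨j, rfl⟩ := Nat.exists_eq_add_of_le' (show 1 ≤ j by omega)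
    rw [h.iff_profile_lt (by omega), heq j (by omega) (by omega), heq (j + 1) (by omega) hje]
    omega
  · obtain ⟨j, rfl⟩ := Nat.exists_eq_add_of_le' (show 1 ≤ e by omega)
    rw [h.iff_profile_lt hlt, heq j (by omega) (by omega)]
    omega

end HasSupports

/-! ### Pairs of Motzkin words -/

theorem isMotzkinWord_iff_natCount (v : List (Option Bool)) :
    IsMotzkinWord v ↔
      Nat.count (fun t => v[t]? = some (some false)) v.length =
        Nat.count (fun t => v[t]? = some (some true)) v.length ∧
      ∀ k ≤ v.length, Nat.count (fun t => v[t]? = some (some false)) k ≤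
        Nat.count (fun t => v[t]? = some (some true)) k := by
  unfold IsMotzkinWord
  rw [count_eq_natCount, count_eq_natCount]
  refine and_congr_right fun _ => ⟨fun h k _ => ?_, fun h p hp => ?_⟩
  · rw [← count_take_eq_natCount, ← count_take_eq_natCount]
    exact h _ (List.take_prefix _ _)
  · rw [List.prefix_iff_eq_take.mp hp, count_take_eq_natCount, count_take_eq_natCount]
    exact h _ hp.length_le

/-- The first down step of `v` is preceded by exactly `k` letters; if there is no down step,
`v` has exactly `k` letters. -/
def LeadFree (k : ℕ) (v : List (Option Bool)) : Prop :=
  k ≤ v.length ∧ (∀ j < k, v[j]? ≠ some (some false)) ∧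
    (k < v.length → v[k]? = some (some false))

/-- The last up step of `v` is followed by exactly `k` letters; if there is no up step,
`v` has exactly `k` letters. -/
def TrailFree (k : ℕ) (v : List (Option Bool)) : Prop :=
  k ≤ v.length ∧ (∀ j, v.length - k ≤ j → v[j]? ≠ some (some true)) ∧
    (k < v.length → v[v.length - k - 1]? = some (some true))

/-- The support of `rStat` encoded by the words `c₁` and `c₂` around a common element. -/
def downSupport (c₁ c₂ : List (Option Bool)) (i : ℕ) : Prop :=
  i = c₁.length + 1 ∨ 1 ≤ i ∧ (c₁ ++ none :: c₂)[i - 1]? = some (some false)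

/-- The support of `sStat` encoded by the words `c₁` and `c₂` around a common element. -/
def upSupport (c₁ c₂ : List (Option Bool)) (i : ℕ) : Prop :=
  (i = 0 ∨ c₁.length + c₂.length + 2 ≤ i) ∨
    i = c₁.length + 1 ∨ 1 ≤ i ∧ (c₁ ++ none :: c₂)[i - 1]? = some (some true)

instance (c₁ c₂ : List (Option Bool)) : DecidablePred (downSupport c₁ c₂) :=
  fun _ => inferInstanceAs (Decidable (_ ∨ _))

instance (c₁ c₂ : List (Option Bool)) : DecidablePred (upSupport c₁ c₂) :=
  fun _ => inferInstanceAs (Decidable (_ ∨ _))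

section Supports

variable (c₁ c₂ : List (Option Bool))

theorem downSupport_left {t : ℕ} (ht : t < c₁.length) :
    downSupport c₁ c₂ (t + 1) ↔ c₁[t]? = some (some false) := by
  unfold downSupport
  rw [Nat.add_sub_cancel, List.getElem?_append_left ht]
  constructor
  · rintro (h | h)
    · omega
    · exact h.2
  · exact fun h => Or.inr ⟨by omega, h⟩

theorem downSupport_right (t : ℕ) :
    downSupport c₁ c₂ (c₁.length + 2 + t) ↔ c₂[t]? = some (some false) := by
  unfold downSupport
  rw [List.getElem?_append_right (by omega),
    show c₁.length + 2 + t - 1 - c₁.length = t + 1 by omega, List.getElem?_cons_succ]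
  constructor
  · rintro (h | h)
    · omega
    · exact h.2
  · exact fun h => Or.inr ⟨by omega, h⟩

theorem upSupport_left {t : ℕ} (ht : t < c₁.length) :
    upSupport c₁ c₂ (t + 1) ↔ c₁[t]? = some (some true) := by
  unfold upSupport
  rw [Nat.add_sub_cancel, List.getElem?_append_left ht]
  constructor
  · rintro ((h | h) | h | h)
    · omega
    · omega
    · omega
    · exact h.2
  · exact fun h => Or.inr (Or.inr ⟨by omega, h⟩)

theorem upSupport_right {t : ℕ} (ht : t < c₂.length) :
    upSupport c₁ c₂ (c₁.length + 2 + t) ↔ c₂[t]? = some (some true) := by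
  unfold upSupport
  rw [List.getElem?_append_right (by omega),
    show c₁.length + 2 + t - 1 - c₁.length = t + 1 by omega, List.getElem?_cons_succ]
  constructor
  · rintro ((h | h) | h | h)
    · omega
    · omega
    · omega
    · exact h.2
  · exact fun h => Or.inr (Or.inr ⟨by omega, h⟩)

theorem downSupport_mid : downSupport c₁ c₂ (c₁.length + 1) := Or.inl rfl

theorem upSupport_mid : upSupport c₁ c₂ (c₁.length + 1) := Or.inr (Or.inl rfl)

theorem not_downSupport_zero : ¬ downSupport c₁ c₂ 0 := by
  rintro (h | h) <;> omega

theorem upSupport_zero : upSupport c₁ c₂ 0 := Or.inl (Or.inl rfl)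

theorem upSupport_of_ge {i : ℕ} (h : c₁.length + c₂.length + 2 ≤ i) : upSupport c₁ c₂ i :=
  Or.inl (Or.inr h)

theorem eq_of_downSupport_of_upSupport {i : ℕ} (h1 : 1 ≤ i) (hi : i < c₁.length + c₂.length + 2)
    (hd : downSupport c₁ c₂ i) (hu : upSupport c₁ c₂ i) : i = c₁.length + 1 := by
  rcases hd with h | h
  · exact h
  rcases hu with (h' | h') | h' | h'
  · omega
  · omega
  · exact h'
  · rw [h.2] at h'
    simp at h'

theorem count_downSupport_left {k : ℕ} (hk : k ≤ c₁.length) :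
    Nat.count (downSupport c₁ c₂) (k + 1) = Nat.count (fun t => c₁[t]? = some (some false)) k := by
  induction k with
  | zero => simp [Nat.count_succ, not_downSupport_zero]
  | succ k ih =>
    rw [Nat.count_succ, ih (by omega), Nat.count_succ]
    simp only [downSupport_left c₁ c₂ hk]

theorem count_upSupport_left {k : ℕ} (hk : k ≤ c₁.length) :
    Nat.count (upSupport c₁ c₂) (k + 1) =
      Nat.count (fun t => c₁[t]? = some (some true)) k + 1 := by
  induction k with
  | zero => simp [Nat.count_succ, upSupport_zero]
  | succ k ih =>
    rw [Nat.count_succ, ih (by omega), Nat.count_succ]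
    simp only [upSupport_left c₁ c₂ hk]
    omega

theorem count_downSupport_right (k : ℕ) :
    Nat.count (downSupport c₁ c₂) (c₁.length + 2 + k) =
      Nat.count (fun t => c₁[t]? = some (some false)) c₁.length + 1 +
      Nat.count (fun t => c₂[t]? = some (some false)) k := by
  induction k with
  | zero =>
    rw [add_zero, Nat.count_succ, if_pos (downSupport_mid c₁ c₂),
      count_downSupport_left c₁ c₂ le_rfl, Nat.count_zero, add_zero]
  | succ k ih =>
    rw [← add_assoc, Nat.count_succ, ih, Nat.count_succ]
    simp only [downSupport_right c₁ c₂]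
    omega

theorem count_upSupport_right {k : ℕ} (hk : k ≤ c₂.length) :
    Nat.count (upSupport c₁ c₂) (c₁.length + 2 + k) =
      Nat.count (fun t => c₁[t]? = some (some true)) c₁.length + 2 +
      Nat.count (fun t => c₂[t]? = some (some true)) k := by
  induction k with
  | zero =>
    rw [add_zero, Nat.count_succ, if_pos (upSupport_mid c₁ c₂),
      count_upSupport_left c₁ c₂ le_rfl, Nat.count_zero, add_zero]
  | succ k ih =>
    rw [← add_assoc, Nat.count_succ, ih (by omega), Nat.count_succ]
    simp only [upSupport_right c₁ c₂ hk]
    omega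

end Supports

/-- The pairs of Motzkin words that describe the two components of a Dyck word. -/
def motzkinPairs (n k l : ℕ) : Set (List (Option Bool) × List (Option Bool)) :=
  {c | c.1.length + c.2.length + 2 = n ∧ IsMotzkinWord c.1 ∧ IsMotzkinWord c.2 ∧
    TrailFree k c.1 ∧ LeadFree l c.2}

theorem exists_hasSupports_of_isMotzkinWord {n : ℕ} {c₁ c₂ : List (Option Bool)}
    (hlen : c₁.length + c₂.length + 2 = n) (h₁ : IsMotzkinWord c₁) (h₂ : IsMotzkinWord c₂) :
    ∃ w, HasSupports n w (downSupport c₁ c₂) (upSupport c₁ c₂) := by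
  rw [isMotzkinWord_iff_natCount] at h₁ h₂
  refine exists_hasSupports (by omega) (not_downSupport_zero _ _) (upSupport_zero _ _)
    (fun i hi => upSupport_of_ge _ _ (by omega)) (fun i hi => ?_) ?_
  · rcases Nat.lt_or_ge c₁.length i with h | h
    · obtain ⟨k, rfl⟩ := Nat.exists_eq_add_of_le h
      rw [show c₁.length.succ + k + 1 = c₁.length + 2 + k by omega, count_downSupport_right,
        count_upSupport_right _ _ (by omega)]
      have := h₂.2 k (by omega)
      omega
    · rw [count_downSupport_left _ _ h, count_upSupport_left _ _ h]
      have := h₁.2 i h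
      omega
  · rw [show n = c₁.length + 2 + c₂.length by omega, count_downSupport_right,
      count_upSupport_right _ _ le_rfl]
    omega

/-- Dyck words of `dyckRS n r s` with exactly two returns. -/
def twoReturns (n r s : ℕ) : Set (List Bool) := {w | w ∈ dyckRS n r s ∧ (returns n w).card = 2}

theorem IsDyckWord.mem_returns {n : ℕ} {w : List Bool} (hw : IsDyckWord n w) {k : ℕ} :
    k ∈ returns n w ↔ 1 ≤ k ∧ (k = n ∨ k < n ∧ profile w k = k) := by
  unfold returns
  rw [Finset.mem_filter, Finset.mem_Icc]
  rcases lt_trichotomy k n with h | rfl | h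
  · rw [hw.return_iff h]
    constructor
    · exact fun h' => ⟨h'.1.1, Or.inr ⟨h, h'.2⟩⟩
    · rintro ⟨h1, h2 | h2⟩
      · omega
      · exact ⟨⟨h1, h.le⟩, h2.2⟩
  · rw [← hw.1, List.take_length, hw.2.1, hw.2.2.1]
    simp
  · constructor
    · intro h'
      omega
    · intro h'
      omega

/-- At an interior return both statistics are positive. -/
theorem IsDyckWord.pos_of_profile_eq {n : ℕ} {w : List Bool} (hw : IsDyckWord n w) {k : ℕ}
    (h1 : 1 ≤ k) (hk : k < n) (hp : profile w k = k) : 0 < rStat w k ∧ 0 < sStat w k := by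
  have := hw.profile_le (i := k - 1) (by omega)
  rw [hw.rStat_eq h1 hk, hw.sStat_eq h1 hk, Finset.card_pos]
  exact ⟨by omega, k, Finset.mem_filter.mpr ⟨Finset.mem_range.mpr hk, hp⟩⟩

theorem mem_twoReturns_iff {n r s : ℕ} (hr : 1 ≤ r) (hs : 1 ≤ s) {w : List Bool} :
    w ∈ twoReturns n r s ↔ IsDyckWord n w ∧ ∃ i, 1 ≤ i ∧ i < n ∧ profile w i = i ∧
      rStat w i = r ∧ sStat w i = s ∧
      ∀ j, 1 ≤ j → j < n → 0 < rStat w j → 0 < sStat w j → j = i := by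
  constructor
  · rintro ⟨⟨hw, i, hi, hpos, hri, hsi, huniq⟩, hcard⟩
    refine ⟨hw, ?_⟩
    rw [Finset.mem_Icc] at hi
    have huniq' : ∀ j, 1 ≤ j → j < n → 0 < rStat w j → 0 < sStat w j → j = i :=
      fun j h1 h2 h3 h4 => huniq j (Finset.mem_Icc.mpr ⟨h1, by omega⟩) ⟨h3, h4⟩
    obtain ⟨k, hk, hkn⟩ := Finset.exists_mem_ne (by omega : 1 < (returns n w).card) n
    rw [hw.mem_returns] at hk
    obtain ⟨h1, h2 | ⟨h2, h3⟩⟩ := hk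
    · exact absurd h2 hkn
    have hpk := hw.pos_of_profile_eq h1 h2 h3
    obtain rfl := huniq' k h1 h2 hpk.1 hpk.2
    exact ⟨k, h1, h2, h3, hri, hsi, huniq'⟩
  · rintro ⟨hw, i, h1, hi, hp, hri, hsi, huniq⟩
    refine ⟨⟨hw, i, Finset.mem_Icc.mpr ⟨h1, by omega⟩, by omega, hri, hsi, fun j hj hpos => ?_⟩, ?_⟩
    · rw [Finset.mem_Icc] at hj
      exact huniq j hj.1 (by omega) hpos.1 hpos.2
    · rw [Finset.card_eq_two]
      refine ⟨i, n, hi.ne, ?_⟩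
      ext k
      rw [hw.mem_returns, Finset.mem_insert, Finset.mem_singleton]
      constructor
      · rintro ⟨hk1, rfl | ⟨hk2, hk3⟩⟩
        · exact Or.inr rfl
        · have hpk := hw.pos_of_profile_eq hk1 hk2 hk3
          exact Or.inl (huniq k hk1 hk2 hpk.1 hpk.2)
      · rintro (rfl | rfl)
        · exact ⟨h1, Or.inr ⟨hi, hp⟩⟩
        · exact ⟨by omega, Or.inl rfl⟩

theorem HasSupports.mem_twoReturns_iff {n k l : ℕ} {w : List Bool} {c₁ c₂ : List (Option Bool)}
    (hlen : c₁.length + c₂.length + 2 = n)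
    (h : HasSupports n w (downSupport c₁ c₂) (upSupport c₁ c₂)) :
    w ∈ twoReturns n (k + 1) (l + 1) ↔ (c₁, c₂) ∈ motzkinPairs n k l := by
  rw [_root_.mem_twoReturns_iff (by omega) (by omega)]
  have hmid : c₁.length + 1 < n := by omega
  have huniq : ∀ j, 1 ≤ j → j < n → 0 < rStat w j → 0 < sStat w j → j = c₁.length + 1 :=
    fun j h1 hj hr hs => eq_of_downSupport_of_upSupport c₁ c₂ h1 (by omega)
      ((h.iff_rStat j h1 hj).2 hr) ((h.iff_sStat j h1 hj).2 hs)
  have hpos : 0 < rStat w (c₁.length + 1) ∧ 0 < sStat w (c₁.length + 1) :=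
    ⟨(h.iff_rStat _ (by omega) hmid).1 (downSupport_mid _ _),
      (h.iff_sStat _ (by omega) hmid).1 (upSupport_mid _ _)⟩
  have hbal := h.profile_eq_self_iff hmid (upSupport_mid _ _)
  rw [count_upSupport_left _ _ le_rfl,
    show c₁.length + 1 + 1 = c₁.length + 2 + 0 by omega, count_downSupport_right] at hbal
  have hpair : profile w (c₁.length + 1) = c₁.length + 1 ↔
      IsMotzkinWord c₁ ∧ IsMotzkinWord c₂ := by
    rw [hbal, isMotzkinWord_iff_natCount, isMotzkinWord_iff_natCount]
    constructor
    · intro heq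
      simp only [Nat.count_zero, add_zero] at heq
      have htot := h.count_eq_count_add_one (by omega)
      rw [show n = c₁.length + 2 + c₂.length by omega, count_downSupport_right,
        count_upSupport_right _ _ le_rfl] at htot
      refine ⟨⟨by omega, fun j hj => ?_⟩, by omega, fun j hj => ?_⟩
      · have := h.count_lt_count (i := j) (by omega)
        rw [count_downSupport_left _ _ hj, count_upSupport_left _ _ hj] at this
        omega
      · have := h.count_lt_count (i := c₁.length + 1 + j) (by omega)
        rw [show c₁.length + 1 + j + 1 = c₁.length + 2 + j by omega, count_downSupport_right,
          count_upSupport_right _ _ hj] at this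
        omega
    · rintro ⟨⟨h1, -⟩, -⟩
      simp only [Nat.count_zero, add_zero]
      omega
  have htrail : profile w (c₁.length + 1) = c₁.length + 1 →
      (rStat w (c₁.length + 1) = k + 1 ↔ TrailFree k c₁) := by
    intro hp
    obtain ⟨s1, s2, s3⟩ := h.rStat_spec (by omega) hmid hp
    constructor
    · intro hr
      rw [hr] at s1 s2 s3
      refine ⟨by omega, fun j hj => ?_, fun hk => ?_⟩
      · by_cases hjl : j < c₁.length
        · rw [Ne, ← upSupport_left c₁ c₂ hjl]
          exact s3 _ (by omega) (by omega)
        · rw [List.getElem?_eq_none (by omega)]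
          simp
      · rw [← upSupport_left c₁ c₂ (by omega)]
        convert s2 using 1
        omega
    · rintro ⟨t1, t2, t3⟩
      rcases lt_trichotomy (rStat w (c₁.length + 1)) (k + 1) with hlt | heq | hgt
      · exfalso
        have e : c₁.length + 1 - rStat w (c₁.length + 1) =
          (c₁.length - rStat w (c₁.length + 1)) + 1 := by omega
        rw [e, upSupport_left c₁ c₂ (by omega)] at s2
        exact t2 _ (by omega) s2
      · exact heq
      · exfalso
        have hk : k < c₁.length := by omega
        have := t3 hk
        rw [← upSupport_left c₁ c₂ (by omega)] at this
        exact s3 _ (by omega) (by omega) this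
  have hlead : profile w (c₁.length + 1) = c₁.length + 1 →
      (sStat w (c₁.length + 1) = l + 1 ↔ LeadFree l c₂) := by
    intro hp
    obtain ⟨s1, s2, s3⟩ := h.sStat_spec (by omega) hmid hp
    constructor
    · intro hr
      rw [hr] at s1 s2 s3
      refine ⟨by omega, fun j hj => ?_, fun hk => ?_⟩
      · rw [Ne, ← downSupport_right c₁ c₂]
        exact s2 _ (by omega) (by omega)
      · rw [← downSupport_right c₁ c₂]
        convert s3 (by omega) using 1
        omega
    · rintro ⟨t1, t2, t3⟩
      rcases lt_trichotomy (sStat w (c₁.length + 1)) (l + 1) with hlt | heq | hgt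
      · exfalso
        have := s3 (by omega)
        have e : c₁.length + 1 + sStat w (c₁.length + 1) =
          c₁.length + 2 + (sStat w (c₁.length + 1) - 1) := by omega
        rw [e, downSupport_right] at this
        exact t2 _ (by omega) this
      · exact heq
      · exfalso
        have := t3 (by omega)
        rw [← downSupport_right c₁ c₂] at this
        exact s2 _ (by omega) (by omega) this
  constructor
  · rintro ⟨-, i, h1, hi, hp, hr, hs, hu⟩
    obtain rfl : i = c₁.length + 1 := (hu _ (by omega) hmid hpos.1 hpos.2).symm
    exact ⟨hlen, (hpair.1 hp).1, (hpair.1 hp).2, (htrail hp).1 hr, (hlead hp).1 hs⟩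
  · rintro ⟨-, m1, m2, ht, hl⟩
    have hp := hpair.2 ⟨m1, m2⟩
    exact ⟨h.isDyckWord, _, by omega, hmid, hp, (htrail hp).2 ht, (hlead hp).2 hl, huniq⟩

theorem exists_hasSupports_of_mem_twoReturns {n r s : ℕ} (hr : 1 ≤ r) (hs : 1 ≤ s)
    {w : List Bool} (hw : w ∈ twoReturns n r s) : ∃ c₁ c₂ : List (Option Bool),
      c₁.length + c₂.length + 2 = n ∧
      HasSupports n w (downSupport c₁ c₂) (upSupport c₁ c₂) := by
  obtain ⟨hd, i, h1, hi, hp, hri, hsi, hu⟩ := (mem_twoReturns_iff hr hs).1 hw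
  let letter : ℕ → Option Bool := fun j =>
    if 0 < sStat w j then some true else if 0 < rStat w j then some false else none
  let c₁ := (List.range (i - 1)).map fun t => letter (t + 1)
  let c₂ := (List.range (n - 1 - i)).map fun t => letter (i + 1 + t)
  have l₁ : c₁.length = i - 1 := by simp [c₁]
  have l₂ : c₂.length = n - 1 - i := by simp [c₂]
  have g₁ : ∀ t < i - 1, c₁[t]? = some (letter (t + 1)) := by
    intro t ht
    simp [c₁, ht]
  have g₂ : ∀ t < n - 1 - i, c₂[t]? = some (letter (i + 1 + t)) := by
    intro t ht
    simp [c₂, ht]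
  have hup : ∀ j, letter j = some true ↔ 0 < sStat w j := by
    intro j
    simp only [letter]
    split_ifs <;> simp [*]
  have hdown : ∀ j, 1 ≤ j → j < n → j ≠ i → (letter j = some false ↔ 0 < rStat w j) := by
    intro j hj1 hjn hji
    by_cases hsj : 0 < sStat w j
    · have hrj : ¬ 0 < rStat w j := fun hrj => hji (hu j hj1 hjn hrj hsj)
      simp only [letter, if_pos hsj, hrj, iff_false]
      decide
    · simp only [letter, if_neg hsj]
      by_cases hrj : 0 < rStat w j <;> simp [hrj]
  have hposi : 0 < rStat w i ∧ 0 < sStat w i := by omega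
  have split : ∀ j, 1 ≤ j → j < n → (∃ t, t < i - 1 ∧ j = t + 1) ∨ j = i ∨
      ∃ t, t < n - 1 - i ∧ j = i + 1 + t := by
    intro j hj1 hjn
    rcases lt_trichotomy j i with h | h | h
    · exact Or.inl ⟨j - 1, by omega, by omega⟩
    · exact Or.inr (Or.inl h)
    · exact Or.inr (Or.inr ⟨j - i - 1, by omega, by omega⟩)
  refine ⟨c₁, c₂, by omega, hd, fun j hj1 hjn => ?_, fun j hj1 hjn => ?_,
    not_downSupport_zero _ _, upSupport_zero _ _, fun j hj => upSupport_of_ge _ _ (by omega)⟩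
  · rcases split j hj1 hjn with ⟨t, ht, rfl⟩ | rfl | ⟨t, ht, rfl⟩
    · rw [downSupport_left _ _ (by omega), g₁ t ht, Option.some_inj,
        hdown _ hj1 hjn (by omega)]
    · exact iff_of_true (Or.inl (by omega)) hposi.1
    · rw [show i + 1 + t = c₁.length + 2 + t by omega, downSupport_right, g₂ t ht,
        Option.some_inj, hdown _ hj1 hjn (by omega), show i + 1 + t = c₁.length + 2 + t by omega]
  · rcases split j hj1 hjn with ⟨t, ht, rfl⟩ | rfl | ⟨t, ht, rfl⟩
    · rw [upSupport_left _ _ (by omega), g₁ t ht, Option.some_inj, hup]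
    · exact iff_of_true (Or.inr (Or.inl (by omega))) hposi.2
    · rw [show i + 1 + t = c₁.length + 2 + t by omega, upSupport_right _ _ (by omega), g₂ t ht,
        Option.some_inj, hup, show i + 1 + t = c₁.length + 2 + t by omega]

theorem HasSupports.eq_pair {n : ℕ} {w : List Bool} {c₁ c₂ d₁ d₂ : List (Option Bool)}
    (hc : c₁.length + c₂.length + 2 = n) (hd : d₁.length + d₂.length + 2 = n)
    (h : HasSupports n w (downSupport c₁ c₂) (upSupport c₁ c₂))
    (h' : HasSupports n w (downSupport d₁ d₂) (upSupport d₁ d₂)) : c₁ = d₁ ∧ c₂ = d₂ := by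
  have hdown : ∀ i, 1 ≤ i → i < n → (downSupport c₁ c₂ i ↔ downSupport d₁ d₂ i) :=
    fun i h1 hi => (h.iff_rStat i h1 hi).trans (h'.iff_rStat i h1 hi).symm
  have hup : ∀ i, 1 ≤ i → i < n → (upSupport c₁ c₂ i ↔ upSupport d₁ d₂ i) :=
    fun i h1 hi => (h.iff_sStat i h1 hi).trans (h'.iff_sStat i h1 hi).symm
  have hl₁ : c₁.length = d₁.length := by
    have := eq_of_downSupport_of_upSupport d₁ d₂ (i := c₁.length + 1) (by omega) (by omega)
      ((hdown _ (by omega) (by omega)).1 (downSupport_mid _ _))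
      ((hup _ (by omega) (by omega)).1 (upSupport_mid _ _))
    omega
  have hl₂ : c₂.length = d₂.length := by omega
  have letter_ext : ∀ x y : Option Bool, (x = some false ↔ y = some false) →
      (x = some true ↔ y = some true) → x = y := by decide
  constructor
  · refine List.ext_getElem hl₁ fun t ht ht' => letter_ext _ _ ?_ ?_
    · have := hdown (t + 1) (by omega) (by omega)
      rwa [downSupport_left _ _ ht, downSupport_left _ _ ht', List.getElem?_eq_getElem ht,
        List.getElem?_eq_getElem ht', Option.some_inj, Option.some_inj] at this
    · have := hup (t + 1) (by omega) (by omega)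
      rwa [upSupport_left _ _ ht, upSupport_left _ _ ht', List.getElem?_eq_getElem ht,
        List.getElem?_eq_getElem ht', Option.some_inj, Option.some_inj] at this
  · refine List.ext_getElem hl₂ fun t ht ht' => letter_ext _ _ ?_ ?_
    · have := hdown (c₁.length + 2 + t) (by omega) (by omega)
      rwa [downSupport_right, hl₁, downSupport_right, List.getElem?_eq_getElem ht,
        List.getElem?_eq_getElem ht', Option.some_inj, Option.some_inj] at this
    · have := hup (c₁.length + 2 + t) (by omega) (by omega)
      rwa [upSupport_right _ _ ht, hl₁, upSupport_right _ _ ht', List.getElem?_eq_getElem ht,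
        List.getElem?_eq_getElem ht', Option.some_inj, Option.some_inj] at this

theorem ncard_twoReturns (n k l : ℕ) :
    (twoReturns n (k + 1) (l + 1)).ncard = (motzkinPairs n k l).ncard := by
  symm
  have hex : ∀ c, c ∈ motzkinPairs n k l →
      ∃ w, HasSupports n w (downSupport c.1 c.2) (upSupport c.1 c.2) := fun c hc =>
    exists_hasSupports_of_isMotzkinWord hc.1 hc.2.1 hc.2.2.1
  refine Set.ncard_congr (fun c hc => (hex c hc).choose)
    (fun c hc => (HasSupports.mem_twoReturns_iff hc.1 (hex c hc).choose_spec).2 hc)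
    (fun c d hc hd heq => ?_) (fun w hw => ?_)
  · have h := (hex c hc).choose_spec
    have h' := (hex d hd).choose_spec
    have heq : (hex c hc).choose = (hex d hd).choose := heq
    rw [heq] at h
    have := h.eq_pair hc.1 hd.1 h'
    exact Prod.ext this.1 this.2
  · obtain ⟨c₁, c₂, hlen, h⟩ :=
      exists_hasSupports_of_mem_twoReturns (by omega) (by omega) hw
    have hc : (c₁, c₂) ∈ motzkinPairs n k l := (h.mem_twoReturns_iff hlen).1 hw
    exact ⟨(c₁, c₂), hc, (hex _ hc).choose_spec.eq_word h⟩

/-! ### Reversal of Motzkin words -/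

/-- Read a Motzkin word backwards, exchanging up and down steps. -/
def revFlip (c : List (Option Bool)) : List (Option Bool) := (c.map (Option.map not)).reverse

theorem length_revFlip (c : List (Option Bool)) : (revFlip c).length = c.length := by
  simp [revFlip]

theorem revFlip_revFlip (c : List (Option Bool)) : revFlip (revFlip c) = c := by
  simp [revFlip, List.map_reverse, Function.comp_def]

theorem revFlip_append (p q : List (Option Bool)) :
    revFlip (p ++ q) = revFlip q ++ revFlip p := by
  simp [revFlip]

theorem count_revFlip (c : List (Option Bool)) (x : Bool) :
    (revFlip c).count (some x) = c.count (some !x) := by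
  unfold revFlip
  rw [List.count_reverse]
  induction c with
  | nil => simp
  | cons y c ih =>
    rw [List.map_cons, List.count_cons, List.count_cons, ih]
    congr 1
    clear ih
    revert x y
    decide

theorem getElem?_revFlip {v : List (Option Bool)} {j : ℕ} (hj : j < v.length) (x : Bool) :
    (revFlip v)[j]? = some (some x) ↔ v[v.length - 1 - j]? = some (some !x) := by
  unfold revFlip
  rw [List.getElem?_reverse (by simpa using hj), List.length_map, List.getElem?_map]
  rcases v[v.length - 1 - j]? with _ | y
  · simp
  · rw [Option.map_some, Option.some_inj, Option.some_inj]
    revert x y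
    decide

theorem IsMotzkinWord.revFlip {c : List (Option Bool)} (h : IsMotzkinWord c) :
    IsMotzkinWord (revFlip c) := by
  refine ⟨by rw [count_revFlip, count_revFlip]; exact h.1.symm, fun p hp => ?_⟩
  obtain ⟨q, hq⟩ := hp
  have hc := congrArg _root_.revFlip hq
  rw [revFlip_append, revFlip_revFlip] at hc
  have h1 := h.2 (_root_.revFlip q) ⟨_, hc⟩
  have h2 := h.1
  rw [← hc, List.count_append, List.count_append, count_revFlip p, count_revFlip p] at h2
  simp only [Bool.not_true, Bool.not_false] at h2
  omega

theorem leadFree_revFlip_iff {k : ℕ} {c : List (Option Bool)} :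
    LeadFree k (revFlip c) ↔ TrailFree k c := by
  unfold LeadFree TrailFree
  rw [length_revFlip]
  refine and_congr_right fun hk => and_congr ⟨fun h j hj => ?_, fun h j hj => ?_⟩
    ⟨fun h hlt => ?_, fun h hlt => ?_⟩
  · by_cases hjl : j < c.length
    · have := h (c.length - 1 - j) (by omega)
      rw [Ne, getElem?_revFlip (by omega)] at this
      rwa [show c.length - 1 - (c.length - 1 - j) = j by omega] at this
    · rw [List.getElem?_eq_none (by omega)]
      simp
  · rw [Ne, getElem?_revFlip (by omega)]
    exact h _ (by omega)
  · have := h hlt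
    rw [getElem?_revFlip hlt] at this
    rwa [show c.length - k - 1 = c.length - 1 - k by omega]
  · rw [getElem?_revFlip hlt, show c.length - 1 - k = c.length - k - 1 by omega]
    exact h hlt

/-! ### Inserting a Motzkin word before the first down step of another one -/

theorem prefix_append_cases {α : Type*} {t p y : List α} (h : t <+: p ++ y) :
    t <+: p ∨ ∃ t', t = p ++ t' ∧ t' <+: y := by
  obtain ⟨e, he⟩ := h
  rcases List.append_eq_append_iff.1 he with ⟨f, h1, -⟩ | ⟨f, h1, h2⟩
  · exact Or.inl ⟨f, h1.symm⟩
  · exact Or.inr ⟨f, h1, e, h2.symm⟩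

theorem leadFree_iff_exists_append {k : ℕ} {v : List (Option Bool)} :
    LeadFree k v ↔ ∃ p y, v = p ++ y ∧ p.length = k ∧ some false ∉ p ∧
      (y = [] ∨ ∃ z, y = some false :: z) := by
  constructor
  · rintro ⟨h1, h2, h3⟩
    refine ⟨v.take k, v.drop k, (List.take_append_drop k v).symm, by simpa using h1, ?_, ?_⟩
    · intro hmem
      obtain ⟨j, hj⟩ := List.getElem?_of_mem hmem
      rw [List.getElem?_take] at hj
      split at hj
      · exact h2 j ‹_› hj
      · simp at hj
    · rcases hd : v.drop k with _ | ⟨x, z⟩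
      · exact Or.inl rfl
      · have hlt : k < v.length := by
          have := congrArg List.length hd
          simp at this
          omega
        have := h3 hlt
        rw [← add_zero k, ← List.getElem?_drop, hd] at this
        simp only [List.getElem?_cons_zero, Option.some_inj] at this
        exact Or.inr ⟨z, by rw [this]⟩
  · rintro ⟨p, y, rfl, rfl, hp, hy⟩
    refine ⟨by simp, fun j hj hjf => ?_, fun hlt => ?_⟩
    · rw [List.getElem?_append_left hj] at hjf
      exact hp (List.mem_of_getElem? hjf)
    · rcases hy with rfl | ⟨z, rfl⟩
      · simp at hlt
      · simp

/-- Motzkin words of length `m` whose first down step is preceded by exactly `k` letters. -/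
def leadFreeMotzkin (m k : ℕ) : Set (List (Option Bool)) :=
  {v | v.length = m ∧ IsMotzkinWord v ∧ LeadFree k v}

/-- A word with a prefix having more down steps than up steps factors at its first passage
below the axis. -/
theorem exists_first_passage (y : List (Option Bool))
    (h : ∃ p, p <+: y ∧ p.count (some true) < p.count (some false)) :
    ∃ q z, y = q ++ some false :: z ∧ IsMotzkinWord q := by
  induction y using List.reverseRecOn with
  | nil =>
    obtain ⟨p, hp, hlt⟩ := h
    rw [List.prefix_nil.mp hp] at hlt
    simp at hlt
  | append_singleton y x ih =>
    by_cases hy : ∃ p, p <+: y ∧ p.count (some true) < p.count (some false)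
    · obtain ⟨q, z, rfl, hq⟩ := ih hy
      exact ⟨q, z ++ [x], by simp, hq⟩
    · push Not at hy
      obtain ⟨p, hp, hlt⟩ := h
      rcases List.prefix_concat_iff.mp hp with rfl | hp
      · have hle := hy y List.prefix_rfl
        rw [List.count_append, List.count_append] at hlt
        have hx : x = some false := by
          by_contra hx
          rw [List.count_eq_zero_of_not_mem (a := some false) (l := [x])
            (by simpa [eq_comm] using hx)] at hlt
          omega
        subst hx
        refine ⟨y, [], by simp, ?_, hy⟩
        simp at hlt
        omega
      · have := hy p hp
        omega

theorem ncard_motzkinPairs (n k l : ℕ) (hn : 2 ≤ n) :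
    (motzkinPairs n k l).ncard = (leadFreeMotzkin (n - 2) (k + l)).ncard := by
  have hdata : ∀ c ∈ motzkinPairs n k l, ∃ p y, revFlip c.1 = p ++ y ∧ p.length = k ∧
      some false ∉ p ∧ (y = [] ∨ ∃ z, y = some false :: z) := fun c hc =>
    leadFree_iff_exists_append.1 (leadFree_revFlip_iff.2 hc.2.2.2.1)
  have hval : ∀ {c : List (Option Bool) × List (Option Bool)} {p y : List (Option Bool)},
      revFlip c.1 = p ++ y → p.length = k →
      (revFlip c.1).take k ++ (c.2 ++ (revFlip c.1).drop k) = p ++ (c.2 ++ y) := by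
    intro c p y h hk
    rw [h, List.take_left' hk, List.drop_left' hk]
  refine Set.ncard_congr (fun c _ => (revFlip c.1).take k ++ (c.2 ++ (revFlip c.1).drop k))
    (fun c hc => ?_) (fun c d hc hd heq => ?_) (fun v hv => ?_)
  · obtain ⟨p, y, hpy, hpk, hp, hy⟩ := hdata c hc
    obtain ⟨hlen, m₁, m₂, -, hl⟩ := hc
    rw [hval hpy hpk]
    obtain ⟨c₁, c₂⟩ := c
    have m₁' := m₁.revFlip
    have hlen' := length_revFlip c₁
    simp only at hpy hlen m₂ hl
    rw [hpy] at m₁' hlen'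
    rw [List.length_append] at hlen'
    refine ⟨by simp only [List.length_append]; omega, ⟨?_, fun t ht => ?_⟩, ?_⟩
    · have := m₁'.1
      have := m₂.1
      simp only [List.count_append] at *
      omega
    · replace ht := prefix_append_cases ht
      rcases ht with ht | ⟨t, rfl, ht⟩
      · exact m₁'.2 t (ht.trans (List.prefix_append _ _))
      · replace ht := prefix_append_cases ht
        have hpf : p.count (some false) = 0 := List.count_eq_zero_of_not_mem hp
        rcases ht with ht | ⟨t, rfl, ht⟩
        · have := m₂.2 t ht
          simp only [List.count_append]
          omega
        · have := m₁'.2 (p ++ t) ((List.prefix_append_right_inj p).2 ht)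
          have := m₂.1
          simp only [List.count_append] at *
          omega
    · obtain ⟨q, x, rfl, hql, hq, hx⟩ := leadFree_iff_exists_append.1 hl
      refine leadFree_iff_exists_append.2 ⟨p ++ q, x ++ y, by simp, by simp [hpk, hql],
        by simp [hp, hq], ?_⟩
      rcases hx with rfl | ⟨z, rfl⟩
      · simpa using hy
      · exact Or.inr ⟨z ++ y, by simp⟩
  · obtain ⟨p, y, hpy, hpk, hp, hy⟩ := hdata c hc
    obtain ⟨p', y', hpy', hpk', hp', hy'⟩ := hdata d hd
    rw [hval hpy hpk, hval hpy' hpk'] at heq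
    obtain ⟨rfl, htail⟩ := List.append_inj heq (hpk.trans hpk'.symm)
    have key : ∀ {q q' x x' : List (Option Bool)}, IsMotzkinWord q → IsMotzkinWord q' →
        (x = [] ∨ ∃ z, x = some false :: z) → ∀ e, q' = q ++ e → x = e ++ x' → e = [] := by
      intro q q' x x' hq hq' hx e h1 h2
      rcases e with _ | ⟨f, e⟩
      · rfl
      exfalso
      rcases hx with rfl | ⟨z, rfl⟩
      · simp at h2
      · rw [List.cons_append, List.cons.injEq] at h2
        obtain ⟨rfl, -⟩ := h2
        have := hq'.2 (q ++ [some false]) ⟨e, by simp [h1]⟩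
        have := hq.1
        simp at *
        omega
    have hcd : c.2 = d.2 ∧ y = y' := by
      rcases List.append_eq_append_iff.1 htail with ⟨e, h1, h2⟩ | ⟨e, h1, h2⟩
      · obtain rfl := key hc.2.2.1 hd.2.2.1 hy e h1 h2
        simp_all
      · obtain rfl := key hd.2.2.1 hc.2.2.1 hy' e h1 h2
        simp_all
    refine Prod.ext ?_ hcd.1
    rw [← revFlip_revFlip c.1, ← revFlip_revFlip d.1, hpy, hpy', hcd.2]
  · obtain ⟨hlen, hm, hl⟩ := hv
    obtain ⟨u, x, rfl, hu, huf, hx⟩ := leadFree_iff_exists_append.1 hl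
    obtain ⟨p, q, rfl, hpk, hql⟩ : ∃ p q, u = p ++ q ∧ p.length = k ∧ q.length = l :=
      ⟨u.take k, u.drop k, (List.take_append_drop k u).symm, by simp; omega, by simp; omega⟩
    have hpf : some false ∉ p := fun h => huf (List.mem_append_left _ h)
    have hqf : some false ∉ q := fun h => huf (List.mem_append_right _ h)
    have hpc : p.count (some false) = 0 := List.count_eq_zero_of_not_mem hpf
    suffices hsuff : ∃ Q y, q ++ x = Q ++ y ∧ IsMotzkinWord Q ∧ IsMotzkinWord (p ++ y) ∧
        LeadFree l Q ∧ (y = [] ∨ ∃ z, y = some false :: z) by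
      obtain ⟨Q, y, h1, h2, h3, h4, h5⟩ := hsuff
      refine ⟨(revFlip (p ++ y), Q), ⟨?_, h3.revFlip, h2, ?_, h4⟩, ?_⟩
      · have := congrArg List.length h1
        simp only [length_revFlip, List.length_append] at *
        omega
      · rw [← leadFree_revFlip_iff, revFlip_revFlip]
        exact leadFree_iff_exists_append.2 ⟨p, y, rfl, hpk, hpf, h5⟩
      · simp only
        rw [hval (c := (revFlip (p ++ y), Q)) (revFlip_revFlip _) hpk, ← h1, List.append_assoc]
    by_cases hpass : ∃ t, t <+: q ++ x ∧ t.count (some true) < t.count (some false)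
    · obtain ⟨Q, z, hQ, hQm⟩ := exists_first_passage _ hpass
      have hQc := hQm.1
      rw [List.append_assoc, hQ] at hm
      refine ⟨Q, some false :: z, hQ, hQm, ⟨?_, fun t ht => ?_⟩, ?_, Or.inr ⟨z, rfl⟩⟩
      · have := hm.1
        simp only [List.count_append] at *
        omega
      · replace ht := prefix_append_cases ht
        rcases ht with ht | ⟨t, rfl, ht⟩
        · exact hm.2 t (ht.trans (List.prefix_append _ _))
        · have := hm.2 (p ++ (Q ++ t)) ((List.prefix_append_right_inj p).2
            ((List.prefix_append_right_inj Q).2 ht))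
          simp only [List.count_append] at *
          omega
      · rcases List.append_eq_append_iff.1 hQ with ⟨e, h1, h2⟩ | ⟨e, h1, h2⟩
        · refine leadFree_iff_exists_append.2 ⟨q, e, h1, hql, hqf, ?_⟩
          rcases e with _ | ⟨f, e⟩
          · exact Or.inl rfl
          · rcases hx with rfl | ⟨z', rfl⟩
            · simp at h2
            · rw [List.cons_append, List.cons.injEq] at h2
              exact Or.inr ⟨e, by rw [h2.1]⟩
        · rcases e with _ | ⟨f, e⟩
          · rw [List.append_nil] at h1
            exact leadFree_iff_exists_append.2 ⟨q, [], by simp [h1], hql, hqf, Or.inl rfl⟩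
          · rw [List.cons_append, List.cons.injEq] at h2
            exact absurd (by rw [h1, ← h2.1]; simp) hqf
    · push Not at hpass
      have hle := hpass _ List.prefix_rfl
      have htot := hm.1
      rw [List.append_assoc, List.count_append (l₁ := p), List.count_append (l₁ := p)] at htot
      have hpu : p.count (some true) = 0 := by omega
      refine ⟨q ++ x, [], by simp, ⟨by omega, hpass⟩, ⟨by simp [hpc, hpu], fun t ht => ?_⟩, ?_,
        Or.inl rfl⟩
      · rw [List.append_nil] at ht
        have := ht.sublist.count_le (some false)
        omega
      · exact leadFree_iff_exists_append.2 ⟨q, x, rfl, hql, hqf, hx⟩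

theorem motzkinBallot_eq_ncard (m k : ℕ) :
    motzkinBallot m (k + 1) = (leadFreeMotzkin m k).ncard := by
  unfold motzkinBallot
  split_ifs with h
  · obtain rfl : m = k := by omega
    symm
    rw [Set.ncard_eq_one]
    refine ⟨List.replicate m none, ?_⟩
    ext v
    rw [Set.mem_singleton_iff]
    constructor
    · rintro ⟨hlen, hm, hl⟩
      obtain ⟨p, y, rfl, hp, hpf, -⟩ := leadFree_iff_exists_append.1 hl
      have hy : y = [] := by
        rw [List.length_append] at hlen
        exact List.eq_nil_of_length_eq_zero (by omega)
      subst hy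
      rw [List.append_nil] at *
      have h0 : p.count (some false) = 0 := List.count_eq_zero_of_not_mem hpf
      have h1 : some true ∉ p := List.count_eq_zero.mp (hm.1.symm.trans h0)
      refine List.eq_replicate_iff.mpr ⟨hlen, fun b hb => ?_⟩
      rcases b with _ | _ | _
      · rfl
      · exact absurd hb hpf
      · exact absurd hb h1
    · rintro rfl
      refine ⟨by simp, ⟨by simp [List.count_replicate], fun p hp => ?_⟩,
        by simp, fun j hj => ?_, by simp⟩
      · have := hp.sublist.count_le (some false)
        simp [List.count_replicate] at this
        omega
      · rw [List.getElem?_replicate]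
        split <;> simp
  · congr 1
    ext v
    unfold leadFreeMotzkin LeadFree
    simp only [Set.mem_ofPred_eq, Nat.add_sub_cancel]
    refine and_congr_right fun hlen => and_congr_right fun _ => ?_
    have hD : ∀ j, v.getD j none = some false ↔ v[j]? = some (some false) := by
      intro j
      rw [List.getD_eq_getElem?_getD]
      rcases v[j]? with _ | x <;> simp
    simp only [Ne, hD]
    constructor
    · rintro ⟨h1, h2⟩
      exact ⟨(List.getElem?_eq_some_iff.mp h1).1.le, h2, fun _ => h1⟩
    · rintro ⟨h1, h2, h3⟩
      exact ⟨h3 (by omega), h2⟩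

/-- **Lemma.** For `r, s ≥ 1` and `n ≥ r + s`, the number of Dyck paths in `𝒟ₙ^{r,s}`
with exactly two returns is `T_{n-2, r+s-1}`. -/
theorem dyckRS_two_returns_count (r s n : ℕ) (hr : 1 ≤ r) (hs : 1 ≤ s) (hn : r + s ≤ n) :
    {w | w ∈ dyckRS n r s ∧ (returns n w).card = 2}.ncard =
      motzkinBallot (n - 2) (r + s - 1) := by
  obtain ⟨k, rfl⟩ := Nat.exists_eq_add_of_le' hr
  obtain ⟨l, rfl⟩ := Nat.exists_eq_add_of_le' hs
  rw [show k + 1 + (l + 1) - 1 = k + l + 1 by omega, motzkinBallot_eq_ncard,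
    ← ncard_motzkinPairs n k l (by omega), ← ncard_twoReturns]
  rfl
end
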